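/- arXiv:2007.12225 — 4 statements merged into one kernel-verified Lean document; each statement's English description precedes it below -/
import Mathlib

section
/- (Proposition 1) Let W be a channel from 𝒳 to 𝒴, let g be a continuous decoding metric, let R > 0, and let Q_X be a pmf on 𝒳 with rational values; let N = { n ∈ ℕ : n·Q_X(a) ∈ ℕ for all a ∈ 𝒳 } (an infinite set). Then there exists, for each n ∈ N, a codebook C_n consisting of M_n = ⌈e^{nR}/2⌉ sequences in 𝒳^n, each with empirical pmf equal to Q_X, such that liminf over n ∈ N, n → ∞, of [ −(1/n) log max_{0 ≤ m < M_n} P_{e|m}(C_n) ] is at least E_ex~(R,Q_X). -/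
open Real BigOperators Filter

namespace EE

variable {𝒳 𝒴 : Type*} [Fintype 𝒳] [Fintype 𝒴]

/-- `p` is a probability mass function on a finite type. -/
def IsPMF {α : Type*} [Fintype α] (p : α → ℝ) : Prop :=
  (∀ a, 0 ≤ p a) ∧ ∑ a, p a = 1

/-- `p` is a strictly positive probability mass function on a finite type. -/
def IsPosPMF {α : Type*} [Fintype α] (p : α → ℝ) : Prop :=
  (∀ a, 0 < p a) ∧ ∑ a, p a = 1

/-- A channel from `𝒳` to `𝒴`: every row `W (·|x)` is a strictly positive pmf on `𝒴`. -/
def IsChannel (W : 𝒳 → 𝒴 → ℝ) : Prop := ∀ x, IsPosPMF (W x)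

/-- A joint pmf on `𝒳 × 𝒴`, in curried form. -/
def IsJointPMF (Q : 𝒳 → 𝒴 → ℝ) : Prop :=
  (∀ x y, 0 ≤ Q x y) ∧ ∑ x, ∑ y, Q x y = 1

/-- A joint pmf on `𝒳 × 𝒳 × 𝒴`, in curried form. -/
def IsJointPMF3 (Q : 𝒳 → 𝒳 → 𝒴 → ℝ) : Prop :=
  (∀ x x' y, 0 ≤ Q x x' y) ∧ ∑ x, ∑ x', ∑ y, Q x x' y = 1

/-- `𝒳`-marginal of a joint pmf. -/
def margX (Q : 𝒳 → 𝒴 → ℝ) : 𝒳 → ℝ := fun x => ∑ y, Q x y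

/-- `𝒴`-marginal of a joint pmf. -/
def margY (Q : 𝒳 → 𝒴 → ℝ) : 𝒴 → ℝ := fun y => ∑ x, Q x y

/-- Shannon entropy (natural logarithm, with the convention `0 log 0 = 0`,
which holds automatically since `Real.log 0 = 0`). -/
noncomputable def ent {α : Type*} [Fintype α] (p : α → ℝ) : ℝ :=
  -∑ a, p a * Real.log (p a)

/-- Mutual information `I_Q(X;Y)` of a joint pmf `Q` on `𝒳 × 𝒴`. -/
noncomputable def mutInf (Q : 𝒳 → 𝒴 → ℝ) : ℝ :=
  ∑ x, ∑ y, Q x y * Real.log (Q x y / (margX Q x * margY Q y))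

/-- Conditional entropy `H_Q(Y|X)` of a joint pmf `Q` on `𝒳 × 𝒴`. -/
noncomputable def condEntYX (Q : 𝒳 → 𝒴 → ℝ) : ℝ :=
  -∑ x, ∑ y, Q x y * Real.log (Q x y / margX Q x)

/-- Conditional entropy `H_Q(X|Y)` of a joint pmf `Q` on `𝒳 × 𝒴`. -/
noncomputable def condEntXY (Q : 𝒳 → 𝒴 → ℝ) : ℝ :=
  -∑ x, ∑ y, Q x y * Real.log (Q x y / margY Q y)

/-- The maximum-likelihood decoding metric `g_ML(Q) = ∑ Q(x,y) log W(y|x)`. -/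
noncomputable def gML (W : 𝒳 → 𝒴 → ℝ) (Q : 𝒳 → 𝒴 → ℝ) : ℝ :=
  ∑ x, ∑ y, Q x y * Real.log (W x y)

/-- The maximum mutual information decoding metric `g_MMI(Q) = I_Q(X;Y)`. -/
noncomputable def gMMI (Q : 𝒳 → 𝒴 → ℝ) : ℝ := mutInf Q

/-- The quantity `a_g(R, Q_Y)`: the maximum of `g(Q_{X̃Y})` over joint pmfs with
`𝒳`-marginal `Q_X`, `𝒴`-marginal `Q_Y` and `I_Q(X̃;Y) ≤ R`. -/
noncomputable def aFun (g : (𝒳 → 𝒴 → ℝ) → ℝ) (QX : 𝒳 → ℝ) (R : ℝ) (QY : 𝒴 → ℝ) : ℝ :=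
  sSup {v : ℝ | ∃ Q : 𝒳 → 𝒴 → ℝ, IsJointPMF Q ∧ margX Q = QX ∧ margY Q = QY ∧
    mutInf Q ≤ R ∧ v = g Q}

/-- Joint pmf on `𝒳 × 𝒳 × 𝒴` built from `Q_{XX'}` and a conditional pmf `Q_{Y|XX'}`. -/
def jointQ (QXX' : 𝒳 → 𝒳 → ℝ) (Qc : 𝒳 → 𝒳 → 𝒴 → ℝ) : 𝒳 → 𝒳 → 𝒴 → ℝ :=
  fun x x' y => QXX' x x' * Qc x x' y

/-- Marginal `Q_{XY}` of a joint pmf on `𝒳 × 𝒳 × 𝒴`. -/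
def margXY3 (Q : 𝒳 → 𝒳 → 𝒴 → ℝ) : 𝒳 → 𝒴 → ℝ := fun x y => ∑ x', Q x x' y

/-- Marginal `Q_{X'Y}` of a joint pmf on `𝒳 × 𝒳 × 𝒴`. -/
def margX'Y3 (Q : 𝒳 → 𝒳 → 𝒴 → ℝ) : 𝒳 → 𝒴 → ℝ := fun x' y => ∑ x, Q x x' y

/-- Marginal `Q_Y` of a joint pmf on `𝒳 × 𝒳 × 𝒴`. -/
def margY3 (Q : 𝒳 → 𝒳 → 𝒴 → ℝ) : 𝒴 → ℝ := fun y => ∑ x, ∑ x', Q x x' y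

/-- Conditional entropy `H_Q(Y|X,X')` of a joint pmf on `𝒳 × 𝒳 × 𝒴`. -/
noncomputable def condEntY3 (Q : 𝒳 → 𝒳 → 𝒴 → ℝ) : ℝ :=
  -∑ x, ∑ x', ∑ y, Q x x' y * Real.log (Q x x' y / ∑ y', Q x x' y')

/-- The objective `−E_Q[log W(Y|X)] − H_Q(Y|X,X')`. -/
noncomputable def obj (W : 𝒳 → 𝒴 → ℝ) (Q : 𝒳 → 𝒳 → 𝒴 → ℝ) : ℝ :=
  (-∑ x, ∑ x', ∑ y, Q x x' y * Real.log (W x y)) - condEntY3 Q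

/-- `Γ_g(Q_{XX'}, R)`: the infimum of `−E_Q[log W(Y|X)] − H_Q(Y|X,X')` over conditional
pmfs `Q_{Y|XX'}` satisfying `g(Q_{X'Y}) ≥ max (g(Q_{XY})) (a_g(R,Q_Y))`, as an
extended real, with `inf ∅ = +∞`. -/
noncomputable def Gamma (W : 𝒳 → 𝒴 → ℝ) (g : (𝒳 → 𝒴 → ℝ) → ℝ) (QX : 𝒳 → ℝ)
    (R : ℝ) (QXX' : 𝒳 → 𝒳 → ℝ) : EReal :=
  sInf {v : EReal | ∃ Qc : 𝒳 → 𝒳 → 𝒴 → ℝ, (∀ x x', IsPMF (Qc x x')) ∧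
    max (g (margXY3 (jointQ QXX' Qc))) (aFun g QX R (margY3 (jointQ QXX' Qc)))
      ≤ g (margX'Y3 (jointQ QXX' Qc)) ∧
    v = ((obj W (jointQ QXX' Qc) : ℝ) : EReal)}

/-- The single-letter TRC exponent `E_trc^g(R, Q_X)`. -/
noncomputable def Etrc (W : 𝒳 → 𝒴 → ℝ) (g : (𝒳 → 𝒴 → ℝ) → ℝ) (QX : 𝒳 → ℝ)
    (R : ℝ) : EReal :=
  sInf {v : EReal | ∃ QXX' : 𝒳 → 𝒳 → ℝ, IsJointPMF QXX' ∧ margX QXX' = QX ∧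
    margY QXX' = QX ∧ mutInf QXX' ≤ 2 * R ∧
    v = Gamma W g QX R QXX' + ((mutInf QXX' : ℝ) : EReal) - ((R : ℝ) : EReal)}

/-- The single-letter expurgated exponent `E_ex^g(R, Q_X)`. -/
noncomputable def Eex (W : 𝒳 → 𝒴 → ℝ) (g : (𝒳 → 𝒴 → ℝ) → ℝ) (QX : 𝒳 → ℝ)
    (R : ℝ) : EReal :=
  sInf {v : EReal | ∃ QXX' : 𝒳 → 𝒳 → ℝ, IsJointPMF QXX' ∧ margX QXX' = QX ∧
    margY QXX' = QX ∧ mutInf QXX' ≤ R ∧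
    v = Gamma W g QX R QXX' + ((mutInf QXX' : ℝ) : EReal) - ((R : ℝ) : EReal)}

/-- `Λ(Q_{XX'})`. -/
noncomputable def Lambda (W : 𝒳 → 𝒴 → ℝ) (QXX' : 𝒳 → 𝒳 → ℝ) : EReal :=
  ⨆ μ : {μ : ℝ // 0 ≤ μ}, ⨅ Qc : {Qc : 𝒳 → 𝒳 → 𝒴 → ℝ // ∀ x x', IsPMF (Qc x x')},
    ((obj W (jointQ QXX' Qc.1) + μ.1 * (mutInf (margXY3 (jointQ QXX' Qc.1)) -
      mutInf (margX'Y3 (jointQ QXX' Qc.1))) : ℝ) : EReal)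

/-- `Φ(Q_{XX'}, R)`. -/
noncomputable def Phi (W : 𝒳 → 𝒴 → ℝ) (QXX' : 𝒳 → 𝒳 → ℝ) (R : ℝ) : EReal :=
  ⨆ μ : {μ : ℝ // 0 ≤ μ}, ⨅ Qc : {Qc : 𝒳 → 𝒳 → 𝒴 → ℝ // ∀ x x', IsPMF (Qc x x')},
    ((obj W (jointQ QXX' Qc.1) + μ.1 * (R - mutInf (margX'Y3 (jointQ QXX' Qc.1))) : ℝ) : EReal)

/-- `Ψ(Q_{XX'})`. -/
noncomputable def Psi (W : 𝒳 → 𝒴 → ℝ) (QXX' : 𝒳 → 𝒳 → ℝ) : EReal :=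
  ⨆ s : {s : ℝ // 0 ≤ s},
    ((-∑ x, ∑ x', QXX' x x' * Real.log (∑ y, W x y ^ (1 - s.1) * W x' y ^ s.1) : ℝ) : EReal)

/-- `G(y, σ, τ, V)`. -/
noncomputable def Gfun (W : 𝒳 → 𝒴 → ℝ) (QX : 𝒳 → ℝ) (y : 𝒴) (σ τ : ℝ)
    (V : 𝒳 → ℝ) : ℝ :=
  (∑ x, W x y ^ (1 / σ) * QX x ^ (τ / σ) * V x ^ (-(τ / σ))) ^ σ

/-- `Θ(Q_{XX'}, R)`. -/
noncomputable def Theta (W : 𝒳 → 𝒴 → ℝ) (QX : 𝒳 → ℝ) (QXX' : 𝒳 → 𝒳 → ℝ)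
    (R : ℝ) : EReal :=
  ⨆ ρ : {ρ : ℝ // 0 ≤ ρ}, ⨅ σ : {σ : ℝ // 0 < σ}, ⨅ τ : {τ : ℝ // 0 ≤ τ},
    ⨅ V : {V : 𝒳 → ℝ // IsPosPMF V},
    ((ρ.1 * σ.1 * (R - ent QX) - ∑ x, ∑ x', QXX' x x' *
      Real.log (∑ y, W x y * W x' y ^ ρ.1 * Gfun W QX y σ.1 τ.1 V.1 ^ (-ρ.1)) : ℝ) : EReal)


/-- Empirical pmf of a length-`n` sequence. -/
noncomputable def empPMF {𝒳 : Type*} [Fintype 𝒳] [DecidableEq 𝒳] {n : ℕ}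
    (x : Fin n → 𝒳) : 𝒳 → ℝ :=
  fun a => ((Finset.univ.filter (fun i => x i = a)).card : ℝ) / n

/-- Joint empirical pmf of a pair of length-`n` sequences. -/
noncomputable def empJoint {𝒳 𝒴 : Type*} [Fintype 𝒳] [Fintype 𝒴]
    [DecidableEq 𝒳] [DecidableEq 𝒴] {n : ℕ}
    (x : Fin n → 𝒳) (y : Fin n → 𝒴) : 𝒳 → 𝒴 → ℝ :=
  fun a b => ((Finset.univ.filter (fun i => x i = a ∧ y i = b)).card : ℝ) / n

/-- Error probability of message `m` of the generalized likelihood decoder with metric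
`g`, for the codebook `C` over the memoryless channel `W`. -/
noncomputable def Perr {𝒳 𝒴 : Type*} [Fintype 𝒳] [Fintype 𝒴]
    [DecidableEq 𝒳] [DecidableEq 𝒴]
    (W : 𝒳 → 𝒴 → ℝ) (g : (𝒳 → 𝒴 → ℝ) → ℝ) {n M : ℕ}
    (C : Fin M → Fin n → 𝒳) (m : Fin M) : ℝ :=
  ∑ m' ∈ Finset.univ.filter (fun m' => m' ≠ m), ∑ y : Fin n → 𝒴,
    (∏ i, W (C m i) (y i)) * Real.exp ((n : ℝ) * g (empJoint (C m') y)) /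
      (∑ mt, Real.exp ((n : ℝ) * g (empJoint (C mt) y)))

/-- The quantity `α(R, Q_Y)`. -/
noncomputable def alphaFun {𝒳 𝒴 : Type*} [Fintype 𝒳] [Fintype 𝒴]
    (g : (𝒳 → 𝒴 → ℝ) → ℝ) (QX : 𝒳 → ℝ) (R : ℝ) (QY : 𝒴 → ℝ) : ℝ :=
  sSup {v : ℝ | ∃ Q : 𝒳 → 𝒴 → ℝ, IsJointPMF Q ∧ margX Q = QX ∧ margY Q = QY ∧
    mutInf Q ≤ R ∧ v = g Q - mutInf Q + R}

/-- The quantity `Γ̃(Q_{XX'}, R)`: the minimum, over all conditional pmfs `Q_{Y|XX'}`, of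
`−E_Q[log W(Y|X)] − H_Q(Y|X,X') + [max {g(Q_{XY}), α(R,Q_Y)} − g(Q_{X'Y})]₊`. -/
noncomputable def GammaTilde {𝒳 𝒴 : Type*} [Fintype 𝒳] [Fintype 𝒴]
    (W : 𝒳 → 𝒴 → ℝ) (g : (𝒳 → 𝒴 → ℝ) → ℝ) (QX : 𝒳 → ℝ) (R : ℝ)
    (QXX' : 𝒳 → 𝒳 → ℝ) : EReal :=
  sInf {v : EReal | ∃ Qc : 𝒳 → 𝒳 → 𝒴 → ℝ, (∀ x x', IsPMF (Qc x x')) ∧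
    v = ((obj W (jointQ QXX' Qc)
      + max (max (g (margXY3 (jointQ QXX' Qc)))
            (alphaFun g QX R (margY3 (jointQ QXX' Qc)))
          - g (margX'Y3 (jointQ QXX' Qc))) 0 : ℝ) : EReal)}

/-- The expurgated exponent `Ẽ_ex(R, Q_X)` of Proposition 1. -/
noncomputable def EexTilde {𝒳 𝒴 : Type*} [Fintype 𝒳] [Fintype 𝒴]
    (W : 𝒳 → 𝒴 → ℝ) (g : (𝒳 → 𝒴 → ℝ) → ℝ) (QX : 𝒳 → ℝ) (R : ℝ) : EReal :=
  sInf {v : EReal | ∃ QXX' : 𝒳 → 𝒳 → ℝ, IsJointPMF QXX' ∧ margX QXX' = QX ∧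
    margY QXX' = QX ∧ mutInf QXX' ≤ R ∧
    v = GammaTilde W g QX R QXX' + ((mutInf QXX' : ℝ) : EReal) - ((R : ℝ) : EReal)}

/-- The codebook size `M_n = ⌈e^{nR}/2⌉`. -/
noncomputable def Mn (R : ℝ) (n : ℕ) : ℕ := ⌈Real.exp ((n : ℝ) * R) / 2⌉₊



section counting
variable {ι A B : Type*} [Fintype ι] [DecidableEq ι] [Fintype A] [DecidableEq A]
  [Fintype B] [DecidableEq B]

/-- Count vector of a sequence. -/
def cn {n : ℕ} (z : Fin n → ι) : ι → ℕ :=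
  fun j => (Finset.univ.filter (fun i => z i = j)).card

/-- Pair sequence. -/
def zp {n : ℕ} (x : Fin n → A) (y : Fin n → B) : Fin n → A × B := fun i => (x i, y i)

lemma cn_eq_sum {n : ℕ} (z : Fin n → ι) (j : ι) :
    cn z j = ∑ i, if z i = j then 1 else 0 := by
  unfold cn; rw [Finset.card_filter]

lemma cn_sum {n : ℕ} (z : Fin n → ι) : ∑ j, cn z j = n := by
  simp only [cn_eq_sum]
  rw [Finset.sum_comm]
  simp

lemma cn_le {n : ℕ} (z : Fin n → ι) (j : ι) : cn z j ≤ n := by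
  simpa [cn] using Finset.card_filter_le (Finset.univ : Finset (Fin n)) (fun i => z i = j)

lemma cn_fst {n : ℕ} (x : Fin n → A) (y : Fin n → B) (a : A) :
    ∑ b, cn (zp x y) (a, b) = cn x a := by
  simp only [cn_eq_sum, zp]
  rw [Finset.sum_comm]
  refine Finset.sum_congr rfl fun i _ => ?_
  simp only [Prod.mk.injEq]
  by_cases h : x i = a <;> simp [h]

lemma cn_snd {n : ℕ} (x : Fin n → A) (y : Fin n → B) (b : B) :
    ∑ a, cn (zp x y) (a, b) = cn y b := by
  simp only [cn_eq_sum, zp]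
  rw [Finset.sum_comm]
  refine Finset.sum_congr rfl fun i _ => ?_
  simp only [Prod.mk.injEq]
  by_cases h : y i = b <;> simp [h]

/-- Unit vector. -/
def sg (p : ι) : ι → ℕ := fun q => if p = q then 1 else 0

lemma cn_cons {n : ℕ} (a : ι) (z : Fin n → ι) :
    cn (Fin.cons a z : Fin (n+1) → ι) = sg a + cn z := by
  funext j
  simp only [cn_eq_sum, Pi.add_apply, sg]
  rw [Fin.sum_univ_succ]
  simp only [Fin.cons_zero, Fin.cons_succ]

lemma prod_fact_sg (k : ι → ℕ) (p : ι) :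
    ∏ q, ((sg p + k) q).factorial = (k p + 1) * ∏ q, (k q).factorial := by
  rw [← Finset.mul_prod_erase _ _ (Finset.mem_univ p),
    ← Finset.mul_prod_erase _ (fun q => (k q).factorial) (Finset.mem_univ p), ← mul_assoc]
  congr 1
  · simp [sg, add_comm 1, Nat.factorial_succ]
  · refine Finset.prod_congr rfl fun q hq => ?_
    have : p ≠ q := (Finset.ne_of_mem_erase hq).symm
    simp [sg, this]

lemma count_formula : ∀ (n : ℕ) (y : Fin n → B) (k : A × B → ℕ),
    (∀ b, ∑ a, k (a, b) = cn y b) →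
    (Finset.univ.filter (fun x : Fin n → A => cn (zp x y) = k)).card * ∏ p, (k p).factorial
      = ∏ b, (cn y b).factorial := by
  intro n
  induction n with
  | zero =>
    intro y k hk
    have h0 : ∀ b, cn y b = 0 := fun b => by simp [cn_eq_sum]
    have hk0 : k = 0 := by
      funext p
      have h := hk p.2
      rw [h0, Finset.sum_eq_zero_iff] at h
      exact h p.1 (Finset.mem_univ _)
    subst hk0
    have : ∀ x : Fin 0 → A, cn (zp x y) = 0 := fun x => by
      funext p; simp [cn_eq_sum]
    simp [this, h0]
  | succ n ih =>
    intro y k hk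
    set b0 := y 0 with hb0
    set y' : Fin n → B := Fin.tail y with hy'
    have hy : y = Fin.cons b0 y' := (Fin.cons_self_tail y).symm
    have hcy : cn y = sg b0 + cn y' := by rw [hy, cn_cons]
    have hz : ∀ (a : A) (x : Fin n → A),
        cn (zp (Fin.cons a x : Fin (n+1) → A) y) = sg (a, b0) + cn (zp x y') := by
      intro a x
      rw [← cn_cons]
      congr 1
      funext i
      rw [hy]
      refine Fin.cases ?_ (fun i => ?_) i <;> simp [zp]
    have hsplit : (Finset.univ.filter (fun x : Fin (n+1) → A => cn (zp x y) = k)).card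
        = ∑ a : A, (Finset.univ.filter
            (fun x : Fin n → A => sg (a, b0) + cn (zp x y') = k)).card := by
      simp only [Finset.card_filter]
      rw [← Fintype.sum_equiv (Fin.consEquiv (fun _ => A))
        (fun p : A × (Fin n → A) => if cn (zp (Fin.cons p.1 p.2 : Fin (n+1) → A) y) = k
          then 1 else 0) _ (fun p => rfl)]
      rw [Fintype.sum_prod_type]
      simp only [hz]
    have hterm : ∀ a : A, (Finset.univ.filter
            (fun x : Fin n → A => sg (a, b0) + cn (zp x y') = k)).card * ∏ p, (k p).factorial
        = k (a, b0) * ∏ b, (cn y' b).factorial := by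
      intro a
      by_cases hka : k (a, b0) = 0
      · rw [hka, zero_mul]
        rw [Finset.filter_eq_empty_iff.mpr]
        · simp
        · intro x _ h
          have := congrFun h (a, b0)
          simp [sg] at this
          omega
      · obtain ⟨k', hk'⟩ : ∃ k', k = sg (a, b0) + k' := by
          refine ⟨k - sg (a, b0), ?_⟩
          funext q
          by_cases hq : (a, b0) = q
          · subst hq; simp [sg]; omega
          · simp [sg, hq]
        subst hk'
        rw [prod_fact_sg]
        have hcol : ∀ b, ∑ a, k' (a, b) = cn y' b := by
          intro b
          have h := hk b
          rw [hcy] at h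
          simp only [Pi.add_apply, Finset.sum_add_distrib] at h
          have : ∑ a', sg (a, b0) (a', b) = sg b0 b := by
            simp only [sg, Prod.mk.injEq]
            by_cases hb : b0 = b <;> simp [hb]
          omega
        have := ih y' k' hcol
        simp only [add_right_inj]
        simp only [Pi.add_apply]
        have h1 : sg (a, b0) (a, b0) = 1 := by simp [sg]
        rw [h1, ← this]
        ring
    rw [hsplit, Finset.sum_mul]
    simp only [hterm]
    rw [← Finset.sum_mul, hk b0, hcy, prod_fact_sg]
    simp [sg, add_comm]

lemma exists_seq_cond {n : ℕ} (y : Fin n → B) (k : A × B → ℕ)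
    (hk : ∀ b, ∑ a, k (a, b) = cn y b) : ∃ x : Fin n → A, cn (zp x y) = k := by
  have h := count_formula n y k hk
  by_contra hne
  push Not at hne
  rw [Finset.filter_eq_empty_iff.mpr (fun x _ => hne x)] at h
  have : 0 < ∏ b, (cn y b).factorial := Finset.prod_pos fun b _ => Nat.factorial_pos _
  simp at h
  omega

lemma exists_seq {n : ℕ} (k : A → ℕ) (hk : ∑ a, k a = n) : ∃ x : Fin n → A, cn x = k := by
  obtain ⟨x, hx⟩ := exists_seq_cond (A := A) (fun _ : Fin n => ()) (fun p => k p.1)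
    (by intro b; simp [hk, cn])
  refine ⟨x, ?_⟩
  funext a
  rw [← cn_fst x (fun _ : Fin n => ()) a, hx]
  simp

/-- error unit -/
noncomputable def ell (n : ℕ) : ℝ := 1 + Real.log (n + 1)

lemma ell_ge_one (n : ℕ) : 1 ≤ ell n := by
  have : 0 ≤ Real.log ((n : ℝ) + 1) := Real.log_nonneg (by linarith [n.cast_nonneg (α := ℝ)])
  unfold ell; linarith

lemma ell_mono {m n : ℕ} (h : m ≤ n) : ell m ≤ ell n := by
  unfold ell
  have : (m : ℝ) ≤ n := by exact_mod_cast h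
  gcongr

lemma log_fact_lower (k : ℕ) : (k : ℝ) * Real.log k - k ≤ Real.log (k.factorial) := by
  rcases Nat.eq_zero_or_pos k with rfl | hk
  · simp
  have hk' : (0:ℝ) < k := by exact_mod_cast hk
  have h := Real.pow_div_factorial_le_exp (k : ℝ) hk'.le k
  have hf : (0:ℝ) < k.factorial := by exact_mod_cast Nat.factorial_pos k
  have h2 := Real.log_le_log (by positivity) h
  rw [Real.log_div (by positivity) (by positivity), Real.log_pow, Real.log_exp] at h2
  linarith

lemma log_fact_upper' (k : ℕ) :
    Real.log ((k+1).factorial) ≤ ((k:ℝ)+1) * Real.log (k+1) - (k+1) + 1 + Real.log (k+1) := by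
  induction k with
  | zero => simp
  | succ k ih =>
    rw [Nat.factorial_succ]
    have hf : (0:ℝ) < (k+1).factorial := by exact_mod_cast Nat.factorial_pos (k+1)
    push_cast
    have h1 : (0:ℝ) < (k:ℝ) + 1 := by positivity
    have h2 : (0:ℝ) < (k:ℝ) + 1 + 1 := by positivity
    rw [Real.log_mul h2.ne' hf.ne']
    have h3 : Real.log (((k:ℝ)+1)/((k:ℝ)+1+1)) ≤ ((k:ℝ)+1)/((k:ℝ)+1+1) - 1 :=
      Real.log_le_sub_one_of_pos (by positivity)
    rw [Real.log_div h1.ne' h2.ne'] at h3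
    have h4 : ((k:ℝ)+1+1) * (Real.log ((k:ℝ)+1) - Real.log ((k:ℝ)+1+1)) ≤ -1 := by
      calc _ ≤ ((k:ℝ)+1+1) * (((k:ℝ)+1)/((k:ℝ)+1+1) - 1) := by gcongr
        _ = -1 := by field_simp; ring
    nlinarith

lemma log_fact_upper (k : ℕ) : Real.log (k.factorial) ≤ (k : ℝ) * Real.log k - k + ell k := by
  rcases k with _ | k
  · simp [ell]
  · have := log_fact_upper' k
    unfold ell
    have h2 : Real.log ((k:ℝ)+1) ≤ Real.log ((k:ℝ)+1+1) :=
      Real.log_le_log (by positivity) (by linarith)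
    push_cast at *
    linarith

/-- Empirical pmf. -/
noncomputable def emp {n : ℕ} (z : Fin n → ι) : ι → ℝ := fun j => (cn z j : ℝ) / n

lemma sum_cn_log {n : ℕ} (hn : 0 < n) (z : Fin n → ι) :
    ∑ j, (cn z j : ℝ) * Real.log (cn z j) = n * Real.log n - n * ent (emp z) := by
  have hn' : (0:ℝ) < n := by exact_mod_cast hn
  have hs : ∑ j, (cn z j : ℝ) = n := by exact_mod_cast cn_sum z
  have h : ∀ j, (cn z j : ℝ) * Real.log (cn z j)
      = (cn z j : ℝ) * Real.log n + n * (emp z j * Real.log (emp z j)) := by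
    intro j
    unfold emp
    rcases Nat.eq_zero_or_pos (cn z j) with h0 | h0
    · simp [h0]
    · have : (0:ℝ) < cn z j := by exact_mod_cast h0
      rw [Real.log_div this.ne' hn'.ne']
      field_simp
      ring
  simp only [h, Finset.sum_add_distrib, ← Finset.sum_mul, ← Finset.mul_sum, hs, ent]
  ring

lemma cond_card_log {n : ℕ} (hn : 0 < n) (x : Fin n → A) (y : Fin n → B) :
    let N := (Finset.univ.filter (fun x' : Fin n → A => cn (zp x' y) = cn (zp x y))).card
    (N : ℝ) ≤ Real.exp (n * (ent (emp (zp x y)) - ent (emp y)) + Fintype.card B * ell n) ∧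
    Real.exp (n * (ent (emp (zp x y)) - ent (emp y))
      - (Fintype.card A * Fintype.card B) * ell n) ≤ N := by
  intro N
  have h := count_formula n y (cn (zp x y)) (fun b => cn_snd x y b)
  have hN : 0 < N := Finset.card_pos.mpr ⟨x, by simp⟩
  have hN' : (0:ℝ) < N := by exact_mod_cast hN
  have hlog : Real.log N = ∑ b, Real.log ((cn y b).factorial : ℝ)
      - ∑ p, Real.log ((cn (zp x y) p).factorial : ℝ) := by
    have h' : (N : ℝ) * ∏ p, ((cn (zp x y) p).factorial : ℝ) = ∏ b, ((cn y b).factorial : ℝ) := by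
      exact_mod_cast h
    have hp : ∀ m : ℕ, (m.factorial : ℝ) ≠ 0 := fun m => by exact_mod_cast Nat.factorial_ne_zero m
    rw [← Real.log_prod (fun b _ => hp _), ← Real.log_prod (fun b _ => hp _), ← h',
      Real.log_mul hN'.ne' (Finset.prod_ne_zero_iff.mpr fun b _ => hp _)]
    ring
  have e1 := sum_cn_log hn y
  have e2 := sum_cn_log hn (zp x y)
  have s1 : ∑ b, (cn y b : ℝ) = n := by exact_mod_cast cn_sum y
  have s2 : ∑ b, (cn (zp x y) b : ℝ) = n := by exact_mod_cast cn_sum (zp x y)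
  have u1 : ∑ b, Real.log ((cn y b).factorial : ℝ)
      ≤ ∑ b, ((cn y b : ℝ) * Real.log (cn y b) - cn y b + ell n) :=
    Finset.sum_le_sum fun b _ => (log_fact_upper _).trans (by gcongr; exact ell_mono (cn_le _ _))
  have u2 : ∑ p, Real.log ((cn (zp x y) p).factorial : ℝ)
      ≤ ∑ p, ((cn (zp x y) p : ℝ) * Real.log (cn (zp x y) p) - cn (zp x y) p + ell n) :=
    Finset.sum_le_sum fun b _ => (log_fact_upper _).trans (by gcongr; exact ell_mono (cn_le _ _))
  have l1 : ∑ b, ((cn y b : ℝ) * Real.log (cn y b) - cn y b)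
      ≤ ∑ b, Real.log ((cn y b).factorial : ℝ) :=
    Finset.sum_le_sum fun b _ => log_fact_lower _
  have l2 : ∑ p, ((cn (zp x y) p : ℝ) * Real.log (cn (zp x y) p) - cn (zp x y) p)
      ≤ ∑ p, Real.log ((cn (zp x y) p).factorial : ℝ) :=
    Finset.sum_le_sum fun b _ => log_fact_lower _
  simp only [Finset.sum_add_distrib, Finset.sum_sub_distrib, e1, e2, s1, s2, Finset.sum_const,
    Finset.card_univ, nsmul_eq_mul, Fintype.card_prod, Nat.cast_mul] at u1 u2 l1 l2
  constructor
  · rw [← Real.log_le_iff_le_exp hN', hlog]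
    linarith
  · rw [← Real.le_log_iff_exp_le hN', hlog]
    linarith

lemma card_log {n : ℕ} (hn : 0 < n) (x : Fin n → A) :
    let N := (Finset.univ.filter (fun x' : Fin n → A => cn x' = cn x)).card
    (N : ℝ) ≤ Real.exp (n * ent (emp x) + ell n) ∧
    Real.exp (n * ent (emp x) - Fintype.card A * ell n) ≤ N := by
  have hn' : (n:ℝ) ≠ 0 := by exact_mod_cast hn.ne'
  have h := cond_card_log hn x (fun _ : Fin n => ())
  have hc : ∀ (x' : Fin n → A) (p : A × Unit), cn (zp x' (fun _ : Fin n => ())) p = cn x' p.1 := by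
    intro x' p
    rw [← cn_fst x' (fun _ : Fin n => ()) p.1]; simp
  have h1 : ∀ x' : Fin n → A,
      (cn (zp x' (fun _ : Fin n => ())) = cn (zp x (fun _ : Fin n => ()))) ↔ cn x' = cn x := by
    intro x'
    constructor
    · intro h; funext a; simpa [hc] using congrFun h (a, ())
    · intro h; funext p; rw [hc, hc, h]
  have h2 : ent (emp (zp x (fun _ : Fin n => ()))) = ent (emp x) := by
    simp [ent, emp, hc, Fintype.sum_prod_type]
  have h3 : ent (emp (fun _ : Fin n => ())) = 0 := by
    simp [ent, emp, cn, hn']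
  simp only [h1, h2, h3, Fintype.card_unit, Nat.cast_one, one_mul, mul_one, sub_zero] at h
  exact h

/-- empirical mutual information -/
noncomputable def mi {n : ℕ} (x : Fin n → A) (y : Fin n → B) : ℝ :=
  ent (emp x) + ent (emp y) - ent (emp (zp x y))

/-- Fraction of the type class with a given joint type. -/
lemma frac_bounds {n : ℕ} (hn : 0 < n) (x : Fin n → A) (y : Fin n → B) :
    let N := (Finset.univ.filter (fun x' : Fin n → A => cn (zp x' y) = cn (zp x y))).card
    let T := (Finset.univ.filter (fun x' : Fin n → A => cn x' = cn x)).card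
    (N : ℝ) * Real.exp (n * mi x y) ≤ T * Real.exp ((Fintype.card A + Fintype.card B) * ell n) ∧
    (T : ℝ) * Real.exp (- n * mi x y - (1 + Fintype.card A * Fintype.card B) * ell n) ≤ N := by
  intro N T
  obtain ⟨h1, h2⟩ := cond_card_log hn x y
  obtain ⟨h3, h4⟩ := card_log hn x
  constructor
  · calc (N : ℝ) * Real.exp (n * mi x y)
        ≤ Real.exp (n * (ent (emp (zp x y)) - ent (emp y)) + Fintype.card B * ell n)
          * Real.exp (n * mi x y) := by gcongr
      _ = Real.exp (n * ent (emp x) - Fintype.card A * ell n)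
          * Real.exp ((Fintype.card A + Fintype.card B) * ell n) := by
          rw [← Real.exp_add, ← Real.exp_add]; congr 1; unfold mi; ring
      _ ≤ _ := by gcongr
  · calc (T : ℝ) * Real.exp (- n * mi x y - (1 + Fintype.card A * Fintype.card B) * ell n)
        ≤ Real.exp (n * ent (emp x) + ell n)
          * Real.exp (- n * mi x y - (1 + Fintype.card A * Fintype.card B) * ell n) := by gcongr
      _ = _ := by rw [← Real.exp_add]; congr 1; unfold mi; ring
      _ ≤ _ := h2

/-- Sums over sequences grouped by type. -/
lemma sum_le_types {S κ : Type*} [DecidableEq κ] (s : Finset S) (τ : S → κ)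
    (f : S → ℝ) (hdep : ∀ u ∈ s, ∀ v ∈ s, τ u = τ v → f u = f v) (Bd L : ℝ)
    (hB0 : 0 ≤ Bd)
    (hB : ∀ u ∈ s, ((s.filter (fun v => τ v = τ u)).card : ℝ) * f u ≤ Bd)
    (hL : ((s.image τ).card : ℝ) ≤ L) : ∑ u ∈ s, f u ≤ L * Bd := by
  rw [← Finset.sum_fiberwise_of_maps_to (t := s.image τ) (g := τ)
    (fun u hu => Finset.mem_image_of_mem τ hu)]
  calc _ ≤ ∑ k ∈ s.image τ, Bd := by
        refine Finset.sum_le_sum fun k hk => ?_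
        obtain ⟨u, hu, rfl⟩ := Finset.mem_image.mp hk
        refine le_trans (le_of_eq ?_) (hB u hu)
        rw [Finset.sum_congr rfl (g := fun _ => f u), Finset.sum_const, nsmul_eq_mul]
        intro v hv
        rw [Finset.mem_filter] at hv
        exact hdep v hv.1 u hu hv.2
    _ = (s.image τ).card * Bd := by simp
    _ ≤ _ := by gcongr

lemma card_types {S : Type*} {n : ℕ} (s : Finset S) (τ : S → Fin n → ι) :
    ((s.image (fun u => cn (τ u))).card : ℝ) ≤ Real.exp (Fintype.card ι * ell n) := by
  have h1 : (s.image (fun u => cn (τ u))).card ≤ (n+1) ^ Fintype.card ι := by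
    have hsub : s.image (fun u => cn (τ u)) ⊆
        Fintype.piFinset (fun _ : ι => Finset.range (n+1)) := by
      intro k hk
      obtain ⟨u, _, rfl⟩ := Finset.mem_image.mp hk
      rw [Fintype.mem_piFinset]
      intro j
      rw [Finset.mem_range, Nat.lt_succ_iff]
      simpa [cn] using Finset.card_filter_le (Finset.univ : Finset (Fin n)) (fun i => τ u i = j)
    refine (Finset.card_le_card hsub).trans ?_
    simp [Fintype.card_piFinset]
  calc ((s.image (fun u => cn (τ u))).card : ℝ) ≤ ((n+1) ^ Fintype.card ι : ℕ) := by
        exact_mod_cast h1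
    _ = Real.exp (Fintype.card ι * Real.log (n+1)) := by
        rw [mul_comm, Real.exp_mul, Real.exp_log (by positivity)]; push_cast; norm_num
    _ ≤ _ := by
        apply Real.exp_le_exp.mpr
        unfold ell
        gcongr
        linarith

end counting


section info
variable {ι A B : Type*} [Fintype ι] [Fintype A] [Fintype B]

/-- uncurry -/
def unc (Q : A → B → ℝ) : A × B → ℝ := fun p => Q p.1 p.2

lemma ent_eq (p : ι → ℝ) : ent p = ∑ a, Real.negMulLog (p a) := by
  simp [ent, Real.negMulLog]

lemma ent_cont : Continuous (fun p : ι → ℝ => ent p) := by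
  simp only [ent_eq]
  fun_prop

lemma ent_concave (p q : ι → ℝ) (hp : ∀ a, 0 ≤ p a) (hq : ∀ a, 0 ≤ q a) (t : ℝ) (h0 : 0 ≤ t)
    (h1 : t ≤ 1) : (1 - t) * ent p + t * ent q ≤ ent (fun a => (1 - t) * p a + t * q a) := by
  simp only [ent_eq, Finset.mul_sum]
  rw [← Finset.sum_add_distrib]
  refine Finset.sum_le_sum fun a _ => ?_
  exact Real.concaveOn_negMulLog.2 (hp a) (hq a) (by linarith) h0 (by ring)

lemma ent_prod (p : A → ℝ) (q : B → ℝ) (hp : ∑ a, p a = 1) (hq : ∑ b, q b = 1) :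
    ent (fun z : A × B => p z.1 * q z.2) = ent p + ent q := by
  simp only [ent_eq, Fintype.sum_prod_type, Real.negMulLog_mul, Finset.sum_add_distrib]
  simp only [← Finset.sum_mul, ← Finset.mul_sum, hp, hq]
  ring

lemma mutInf_eq (Q : A → B → ℝ) (hQ : ∀ a b, 0 ≤ Q a b) :
    mutInf Q = ent (margX Q) + ent (margY Q) - ent (unc Q) := by
  have hx : ∀ a b, Q a b ≤ margX Q a := fun a b =>
    Finset.single_le_sum (f := fun b => Q a b) (fun b _ => hQ a b) (Finset.mem_univ b)
  have hy : ∀ a b, Q a b ≤ margY Q b := fun a b =>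
    Finset.single_le_sum (f := fun a => Q a b) (fun a _ => hQ a b) (Finset.mem_univ a)
  have h : ∀ a b, Q a b * Real.log (Q a b / (margX Q a * margY Q b))
      = Q a b * Real.log (Q a b) - Q a b * Real.log (margX Q a)
        - Q a b * Real.log (margY Q b) := by
    intro a b
    rcases (hQ a b).eq_or_lt with h0 | h0
    · simp [← h0]
    · have h1 := h0.trans_le (hx a b)
      have h2 := h0.trans_le (hy a b)
      rw [Real.log_div h0.ne' (by positivity), Real.log_mul h1.ne' h2.ne']
      ring
  unfold mutInf
  simp only [h, Finset.sum_sub_distrib]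
  have e1 : ∑ a, ∑ b, Q a b * Real.log (margX Q a) = - ent (margX Q) := by
    simp only [← Finset.sum_mul, ent, neg_neg]; rfl
  have e2 : ∑ a, ∑ b, Q a b * Real.log (margY Q b) = - ent (margY Q) := by
    rw [Finset.sum_comm]
    simp only [← Finset.sum_mul, ent, neg_neg]; rfl
  have e3 : ∑ a, ∑ b, Q a b * Real.log (Q a b) = - ent (unc Q) := by
    simp only [ent, neg_neg, unc, Fintype.sum_prod_type]
  rw [e1, e2, e3]; ring

lemma margX_sum (Q : A → B → ℝ) (h : ∑ a, ∑ b, Q a b = 1) : ∑ a, margX Q a = 1 := h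

lemma margY_sum (Q : A → B → ℝ) (h : ∑ a, ∑ b, Q a b = 1) : ∑ b, margY Q b = 1 := by
  unfold margY; rw [Finset.sum_comm]; exact h

/-- mixing with the product of the marginals -/
noncomputable def mix (t : ℝ) (Q : A → B → ℝ) (p : A → ℝ) (q : B → ℝ) : A → B → ℝ :=
  fun a b => (1 - t) * Q a b + t * (p a * q b)

lemma mix_margX (t : ℝ) (Q : A → B → ℝ) (p : A → ℝ) (q : B → ℝ) (hQ : margX Q = p)
    (hq : ∑ b, q b = 1) : margX (mix t Q p q) = p := by
  funext a
  have : ∑ b, Q a b = p a := congrFun hQ a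
  simp only [margX, mix, Finset.sum_add_distrib, ← Finset.mul_sum, hq, this]
  ring

lemma mix_margY (t : ℝ) (Q : A → B → ℝ) (p : A → ℝ) (q : B → ℝ) (hQ : margY Q = q)
    (hp : ∑ b, p b = 1) : margY (mix t Q p q) = q := by
  funext b
  have : ∑ a, Q a b = q b := congrFun hQ b
  simp only [margY, mix, Finset.sum_add_distrib, ← Finset.mul_sum, ← Finset.sum_mul, hp, this]
  ring

lemma mix_pmf (t : ℝ) (h0 : 0 ≤ t) (h1 : t ≤ 1) (Q : A → B → ℝ) (p : A → ℝ) (q : B → ℝ)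
    (hQ : IsJointPMF Q) (hp : margX Q = p) (hq : margY Q = q) : IsJointPMF (mix t Q p q) := by
  have hq1 : ∑ b, q b = 1 := by rw [← hq]; exact margY_sum Q hQ.2
  have hp1 : ∑ b, p b = 1 := by rw [← hp]; exact margX_sum Q hQ.2
  constructor
  · intro a b
    have h2 : 0 ≤ p a := by rw [← hp]; exact Finset.sum_nonneg fun b _ => hQ.1 a b
    have h3 : 0 ≤ q b := by rw [← hq]; exact Finset.sum_nonneg fun a _ => hQ.1 a b
    have := hQ.1 a b
    have h4 : 0 ≤ 1 - t := by linarith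
    unfold mix; positivity
  · change ∑ a, margX (mix t Q p q) a = 1
    rw [mix_margX t Q p q hp hq1, hp1]

lemma mix_mutInf (t : ℝ) (h0 : 0 ≤ t) (h1 : t ≤ 1) (Q : A → B → ℝ) (p : A → ℝ) (q : B → ℝ)
    (hQ : IsJointPMF Q) (hp : margX Q = p) (hq : margY Q = q) :
    mutInf (mix t Q p q) ≤ (1 - t) * mutInf Q := by
  have hq1 : ∑ b, q b = 1 := by rw [← hq]; exact margY_sum Q hQ.2
  have hp1 : ∑ b, p b = 1 := by rw [← hp]; exact margX_sum Q hQ.2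
  rw [mutInf_eq _ (mix_pmf t h0 h1 Q p q hQ hp hq).1, mutInf_eq _ hQ.1,
    mix_margX t Q p q hp hq1, mix_margY t Q p q hq hp1, hp, hq]
  have h := ent_concave (unc Q) (fun z : A × B => p z.1 * q z.2) (fun z => hQ.1 _ _)
    (fun z => by
      have h2 : 0 ≤ p z.1 := by rw [← hp]; exact Finset.sum_nonneg fun b _ => hQ.1 _ b
      have h3 : 0 ≤ q z.2 := by rw [← hq]; exact Finset.sum_nonneg fun a _ => hQ.1 a _
      positivity) t h0 h1
  rw [ent_prod p q hp1 hq1] at h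
  have e : unc (mix t Q p q) = fun z => (1 - t) * unc Q z + t * (p z.1 * q z.2) := rfl
  rw [e]
  linarith

lemma prod_pmf (p : A → ℝ) (q : B → ℝ) (hp : IsPMF p) (hq : IsPMF q) :
    IsJointPMF (fun a b => p a * q b) ∧ margX (fun a b => p a * q b) = p ∧
    margY (fun a b => p a * q b) = q ∧ mutInf (fun a b => p a * q b) = 0 := by
  have h1 : margX (fun a b => p a * q b) = p := by
    funext a; simp [margX, ← Finset.mul_sum, hq.2]
  have h2 : margY (fun a b => p a * q b) = q := by
    funext a; simp [margY, ← Finset.sum_mul, hp.2]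
  have h0 : ∀ a b, 0 ≤ p a * q b := fun a b => mul_nonneg (hp.1 a) (hq.1 b)
  refine ⟨⟨h0, ?_⟩, h1, h2, ?_⟩
  · simp [← Finset.mul_sum, hq.2, hp.2]
  · rw [mutInf_eq _ h0, h1, h2]
    have := ent_prod p q hp.2 hq.2
    unfold unc
    simp only [this]; ring

lemma mutInf_contOn : ContinuousOn (mutInf (𝒳 := A) (𝒴 := B)) {Q | IsJointPMF Q} := by
  have : ContinuousOn (fun Q : A → B → ℝ => ent (margX Q) + ent (margY Q) - ent (unc Q))
      {Q | IsJointPMF Q} := by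
    apply Continuous.continuousOn
    have c1 : Continuous (fun Q : A → B → ℝ => margX Q) := by unfold margX; fun_prop
    have c2 : Continuous (fun Q : A → B → ℝ => margY Q) := by unfold margY; fun_prop
    have c3 : Continuous (fun Q : A → B → ℝ => unc Q) := by unfold unc; fun_prop
    exact ((ent_cont.comp c1).add (ent_cont.comp c2)).sub (ent_cont.comp c3)
  exact this.congr fun Q hQ => mutInf_eq Q hQ.1

lemma compact_joint : IsCompact {Q : A → B → ℝ | IsJointPMF Q} := by
  refine (isCompact_Icc (a := (0 : A → B → ℝ)) (b := 1)).of_isClosed_subset ?_ ?_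
  · have : {Q : A → B → ℝ | IsJointPMF Q} =
        (⋂ a, ⋂ b, {Q : A → B → ℝ | 0 ≤ Q a b}) ∩ {Q | ∑ x, ∑ y, Q x y = 1} := by
      ext Q; simp [IsJointPMF]
    rw [this]
    refine IsClosed.inter (isClosed_iInter fun a => isClosed_iInter fun b =>
      isClosed_le continuous_const (by fun_prop)) (isClosed_eq (by fun_prop) continuous_const)
  · intro Q hQ
    refine ⟨fun a b => hQ.1 a b, fun a b => ?_⟩
    have h1 : Q a b ≤ ∑ b, Q a b :=
      Finset.single_le_sum (f := fun b => Q a b) (fun b _ => hQ.1 a b) (Finset.mem_univ b)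
    have h2 : ∑ b, Q a b ≤ ∑ a, ∑ b, Q a b :=
      Finset.single_le_sum (f := fun a => ∑ b, Q a b)
        (fun a _ => Finset.sum_nonneg fun b _ => hQ.1 a b) (Finset.mem_univ a)
    have := hQ.2
    simp only [Pi.one_apply]
    linarith

lemma unif_cont {f : (A → B → ℝ) → ℝ} (hf : ContinuousOn f {Q | IsJointPMF Q})
    (η : ℝ) (hη : 0 < η) : ∃ δ > 0, ∀ Q Q', IsJointPMF Q → IsJointPMF Q' →
      (∀ a b, |Q a b - Q' a b| ≤ δ) → |f Q - f Q'| ≤ η := by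
  have h := compact_joint.uniformContinuousOn_of_continuous hf
  rw [Metric.uniformContinuousOn_iff] at h
  obtain ⟨δ, hδ, h⟩ := h η hη
  refine ⟨δ / 2, by positivity, fun Q Q' hQ hQ' hd => ?_⟩
  have := h Q hQ Q' hQ' ?_
  · rw [Real.dist_eq] at this; exact this.le
  · rw [dist_pi_lt_iff hδ]
    intro a
    rw [dist_pi_lt_iff hδ]
    intro b
    rw [Real.dist_eq]
    linarith [hd a b]

end info

section three
variable {X Y : Type*} [Fintype X] [Fintype Y]

/-- marginal on the first two coordinates -/
def margXX (Q : X → X → Y → ℝ) : X → X → ℝ := fun x x' => ∑ y, Q x x' y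

/-- view as a two-argument function -/
def pr3 (Q : X → X → Y → ℝ) : X × X → Y → ℝ := fun p y => Q p.1 p.2 y

lemma obj_eq (W : X → Y → ℝ) (Q : X → X → Y → ℝ) (hQ : ∀ x x' y, 0 ≤ Q x x' y) :
    obj W Q = (-∑ x, ∑ x', ∑ y, Q x x' y * Real.log (W x y))
      - (ent (unc (pr3 Q)) - ent (unc (margXX Q))) := by
  unfold obj
  congr 1
  have hx : ∀ x x' y, Q x x' y ≤ ∑ y, Q x x' y := fun a a' b =>
    Finset.single_le_sum (f := fun b => Q a a' b) (fun b _ => hQ a a' b) (Finset.mem_univ b)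
  have h : ∀ x x' y, Q x x' y * Real.log (Q x x' y / ∑ y', Q x x' y')
      = Q x x' y * Real.log (Q x x' y) - Q x x' y * Real.log (∑ y', Q x x' y') := by
    intro a a' b
    rcases (hQ a a' b).eq_or_lt with h0 | h0
    · simp [← h0]
    · have h1 := h0.trans_le (hx a a' b)
      rw [Real.log_div h0.ne' h1.ne']
      ring
  unfold condEntY3
  simp only [h, Finset.sum_sub_distrib, ← Finset.sum_mul]
  simp only [ent, unc, pr3, margXX, Fintype.sum_prod_type]
  ring

lemma pr3_pmf {Q : X → X → Y → ℝ} (hQ : IsJointPMF3 Q) : IsJointPMF (pr3 Q) := by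
  refine ⟨fun p y => hQ.1 _ _ _, ?_⟩
  have := hQ.2
  simpa [pr3, Fintype.sum_prod_type] using this

lemma margXX_pmf {Q : X → X → Y → ℝ} (hQ : IsJointPMF3 Q) : IsJointPMF (margXX Q) :=
  ⟨fun x x' => Finset.sum_nonneg fun y _ => hQ.1 _ _ _, hQ.2⟩

lemma margXY_pmf {Q : X → X → Y → ℝ} (hQ : IsJointPMF3 Q) : IsJointPMF (margXY3 Q) := by
  refine ⟨fun x y => Finset.sum_nonneg fun x' _ => hQ.1 _ _ _, ?_⟩
  rw [← hQ.2]
  refine Finset.sum_congr rfl fun x _ => ?_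
  unfold margXY3
  exact Finset.sum_comm

lemma margX'Y_pmf {Q : X → X → Y → ℝ} (hQ : IsJointPMF3 Q) : IsJointPMF (margX'Y3 Q) := by
  refine ⟨fun x y => Finset.sum_nonneg fun x' _ => hQ.1 _ _ _, ?_⟩
  rw [← hQ.2]
  simp only [margX'Y3]
  calc _ = ∑ x', ∑ x, ∑ y, Q x x' y := Finset.sum_congr rfl fun x' _ => Finset.sum_comm
    _ = _ := Finset.sum_comm

/-- The objective functional with a general value in place of `α`. -/
noncomputable def FF (W : X → Y → ℝ) (g : (X → Y → ℝ) → ℝ) (a : ℝ) (Q : X → X → Y → ℝ) : ℝ :=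
  obj W Q + max (max (g (margXY3 Q)) a - g (margX'Y3 Q)) 0

lemma Eex_le (W : X → Y → ℝ) (hW : IsChannel W) (g : (X → Y → ℝ) → ℝ) (QX : X → ℝ) (R : ℝ)
    (Q : X → X → Y → ℝ) (hQ : IsJointPMF3 Q) (h1 : margX (margXX Q) = QX)
    (h2 : margY (margXX Q) = QX) (hI : mutInf (margXX Q) ≤ R) :
    EexTilde W g QX R ≤ ((FF W g (alphaFun g QX R (margY3 Q)) Q + mutInf (margXX Q) - R : ℝ) : EReal) := by
  classical
  set Qc : X → X → Y → ℝ := fun x x' y =>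
    if margXX Q x x' = 0 then W x y else Q x x' y / margXX Q x x' with hQc
  have hj : jointQ (margXX Q) Qc = Q := by
    funext x x' y
    simp only [jointQ, hQc]
    by_cases h : margXX Q x x' = 0
    · rw [h, zero_mul]
      exact ((Finset.sum_eq_zero_iff_of_nonneg (fun y _ => hQ.1 x x' y)).mp h y
        (Finset.mem_univ y)).symm
    · simp only [h, if_false]
      field_simp
  have hc : ∀ x x', IsPMF (Qc x x') := by
    intro x x'
    by_cases h : margXX Q x x' = 0
    · simp only [hQc, h, if_true]
      exact ⟨fun y => ((hW x).1 y).le, (hW x).2⟩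
    · simp only [hQc, h, if_false]
      refine ⟨fun y => div_nonneg (hQ.1 _ _ _) ((margXX_pmf hQ).1 _ _), ?_⟩
      rw [← Finset.sum_div]
      exact div_self h
  have hE : EexTilde W g QX R ≤ GammaTilde W g QX R (margXX Q)
      + ((mutInf (margXX Q) : ℝ) : EReal) - ((R : ℝ) : EReal) :=
    sInf_le ⟨margXX Q, margXX_pmf hQ, h1, h2, hI, rfl⟩
  refine hE.trans ?_
  have hG : GammaTilde W g QX R (margXX Q) ≤
      ((FF W g (alphaFun g QX R (margY3 Q)) Q : ℝ) : EReal) := by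
    refine sInf_le ⟨Qc, hc, ?_⟩
    rw [hj]; rfl
  rw [EReal.coe_sub, EReal.coe_add]
  exact EReal.sub_le_sub (add_le_add hG le_rfl) le_rfl

/-- mixing in three variables -/
noncomputable def mix3 (t : ℝ) (Q : X → X → Y → ℝ) (p : X → ℝ) (q : Y → ℝ) : X → X → Y → ℝ :=
  fun x x' y => (1 - t) * Q x x' y + t * (p x * p x' * q y)

lemma margY3_sum {Q : X → X → Y → ℝ} (hQ : IsJointPMF3 Q) : ∑ y, margY3 Q y = 1 := by
  rw [← hQ.2]; unfold margY3
  rw [Finset.sum_comm]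
  refine Finset.sum_congr rfl fun x _ => ?_
  rw [Finset.sum_comm]

lemma mix3_props (t : ℝ) (h0 : 0 ≤ t) (h1 : t ≤ 1) (Q : X → X → Y → ℝ) (p : X → ℝ) (hp : IsPMF p)
    (hQ : IsJointPMF3 Q) :
    IsJointPMF3 (mix3 t Q p (margY3 Q)) ∧ margXX (mix3 t Q p (margY3 Q)) = mix t (margXX Q) p p ∧
    margY3 (mix3 t Q p (margY3 Q)) = margY3 Q ∧
    ∀ x x' y, |Q x x' y - mix3 t Q p (margY3 Q) x x' y| ≤ t := by
  have hs := margY3_sum hQ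
  have hq0 : ∀ y, 0 ≤ margY3 Q y := fun y =>
    Finset.sum_nonneg fun x _ => Finset.sum_nonneg fun x' _ => hQ.1 _ _ _
  have hXX : margXX (mix3 t Q p (margY3 Q)) = mix t (margXX Q) p p := by
    funext x x'
    simp only [margXX, mix3, mix, Finset.sum_add_distrib, ← Finset.mul_sum, hs]
    ring
  have hYY : margY3 (mix3 t Q p (margY3 Q)) = margY3 Q := by
    funext y
    have e : ∑ x, ∑ x', p x * p x' * margY3 Q y = margY3 Q y := by
      simp only [← Finset.sum_mul, ← Finset.mul_sum, hp.2]; ring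
    have e2 : margY3 (mix3 t Q p (margY3 Q)) y
      = (1 - t) * ∑ x, ∑ x', Q x x' y + t * ∑ x, ∑ x', p x * p x' * margY3 Q y := by
      simp only [margY3, mix3, Finset.sum_add_distrib, ← Finset.mul_sum]
    rw [e2, e]
    unfold margY3
    ring
  have hnn : ∀ x x' y, 0 ≤ p x * p x' * margY3 Q y := fun x x' y =>
    mul_nonneg (mul_nonneg (hp.1 _) (hp.1 _)) (hq0 _)
  refine ⟨⟨fun x x' y => ?_, ?_⟩, hXX, hYY, ?_⟩
  · have := hQ.1 x x' y
    have h3 := hnn x x' y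
    have h4 : 0 ≤ 1 - t := by linarith
    unfold mix3; positivity
  · change ∑ x, ∑ x', margXX (mix3 t Q p (margY3 Q)) x x' = 1
    rw [hXX]
    simp only [mix, Finset.sum_add_distrib, ← Finset.mul_sum, hp.2]
    have : ∑ x, ∑ x', margXX Q x x' = 1 := hQ.2
    rw [this]; ring_nf; simp [hp.2]
  · intro x x' y
    have e : Q x x' y - mix3 t Q p (margY3 Q) x x' y = t * (Q x x' y - p x * p x' * margY3 Q y) := by
      unfold mix3; ring
    rw [e, abs_mul, abs_of_nonneg h0]
    have hle1 : ∀ {κ : Type _} [Fintype κ] (f : κ → ℝ), (∀ k, 0 ≤ f k) → ∑ k, f k = 1 → ∀ k, f k ≤ 1 := by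
      intro κ _ f hf hs k
      rw [← hs]; exact Finset.single_le_sum (fun k _ => hf k) (Finset.mem_univ k)
    have b1 : Q x x' y ≤ 1 := by
      have h := hle1 (fun z : (X × X) × Y => Q z.1.1 z.1.2 z.2) (fun z => hQ.1 _ _ _)
        (by simp only [Fintype.sum_prod_type]; exact hQ.2) ((x, x'), y)
      exact h
    have b2 : p x * p x' * margY3 Q y ≤ 1 := by
      have p1 : p x ≤ 1 := by
        rw [← hp.2]; exact Finset.single_le_sum (fun k _ => hp.1 k) (Finset.mem_univ x)
      have p2 : p x' ≤ 1 := by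
        rw [← hp.2]; exact Finset.single_le_sum (fun k _ => hp.1 k) (Finset.mem_univ x')
      have p3 : margY3 Q y ≤ 1 := by
        rw [← hs]; exact Finset.single_le_sum (fun k _ => hq0 k) (Finset.mem_univ y)
      exact mul_le_one₀ (mul_le_one₀ p1 (hp.1 _) p2) (hq0 _) p3
    have b3 := hQ.1 x x' y
    have b4 := hnn x x' y
    have : |Q x x' y - p x * p x' * margY3 Q y| ≤ 1 := abs_le.mpr ⟨by linarith, by linarith⟩
    nlinarith

/-- the three-variable functionals are uniformly continuous -/
lemma unif_cont3 {f : (X → X → Y → ℝ) → ℝ}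
    (hf : ContinuousOn f {Q | IsJointPMF3 Q})
    (η : ℝ) (hη : 0 < η) : ∃ δ > 0, ∀ Q Q', IsJointPMF3 Q → IsJointPMF3 Q' →
      (∀ x x' y, |Q x x' y - Q' x x' y| ≤ δ) → |f Q - f Q'| ≤ η := by
  have hf' : ContinuousOn (fun P : X × X → Y → ℝ => f (fun x x' y => P (x, x') y))
      {P | IsJointPMF P} := by
    refine hf.comp (Continuous.continuousOn (by fun_prop)) ?_
    intro P hP
    refine ⟨fun x x' y => hP.1 _ _, ?_⟩
    have := hP.2
    simpa [Fintype.sum_prod_type] using this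
  obtain ⟨δ, hδ, h⟩ := unif_cont hf' η hη
  exact ⟨δ, hδ, fun Q Q' hQ hQ' hd => h (pr3 Q) (pr3 Q') (pr3_pmf hQ) (pr3_pmf hQ')
    fun p y => hd _ _ _⟩

lemma obj_contOn (W : X → Y → ℝ) : ContinuousOn (obj W) {Q | IsJointPMF3 Q} := by
  have : Continuous (fun Q : X → X → Y → ℝ =>
      (-∑ x, ∑ x', ∑ y, Q x x' y * Real.log (W x y))
      - (ent (unc (pr3 Q)) - ent (unc (margXX Q)))) := by
    have c1 : Continuous (fun Q : X → X → Y → ℝ => unc (pr3 Q)) := by unfold unc pr3; fun_prop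
    have c2 : Continuous (fun Q : X → X → Y → ℝ => unc (margXX Q)) := by
      unfold unc margXX; fun_prop
    have c3 : Continuous (fun Q : X → X → Y → ℝ =>
      (-∑ x, ∑ x', ∑ y, Q x x' y * Real.log (W x y))) := by fun_prop
    exact c3.sub ((ent_cont.comp c1).sub (ent_cont.comp c2))
  exact this.continuousOn.congr fun Q hQ => obj_eq W Q hQ.1

/-- slack lemma -/
lemma FF_slack (W : X → Y → ℝ) (hW : IsChannel W) (g : (X → Y → ℝ) → ℝ)
    (hg : ContinuousOn g {Q : X → Y → ℝ | IsJointPMF Q}) (QX : X → ℝ) (hQX : IsPMF QX)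
    (R : ℝ) (hR : 0 < R) (c : ℝ) (hc : (c : EReal) < EexTilde W g QX R) (η : ℝ) (hη : 0 < η) :
    ∃ ε > 0, ∀ Q : X → X → Y → ℝ, IsJointPMF3 Q → margX (margXX Q) = QX →
      margY (margXX Q) = QX → mutInf (margXX Q) ≤ R + ε →
      c - η ≤ FF W g (alphaFun g QX R (margY3 Q)) Q + mutInf (margXX Q) - R := by
  have cXX : Continuous (fun Q : X → X → Y → ℝ => margXX Q) := by unfold margXX; fun_prop
  have cXY : Continuous (fun Q : X → X → Y → ℝ => margXY3 Q) := by unfold margXY3; fun_prop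
  have cX'Y : Continuous (fun Q : X → X → Y → ℝ => margX'Y3 Q) := by unfold margX'Y3; fun_prop
  have hη4 : 0 < η / 4 := by positivity
  obtain ⟨d1, hd1, H1⟩ := unif_cont3 (obj_contOn W) (η / 4) hη4
  obtain ⟨d2, hd2, H2⟩ := unif_cont3 (f := fun Q => g (margXY3 Q))
    (hg.comp cXY.continuousOn fun Q hQ => margXY_pmf hQ) (η / 4) hη4
  obtain ⟨d3, hd3, H3⟩ := unif_cont3 (f := fun Q => g (margX'Y3 Q))
    (hg.comp cX'Y.continuousOn fun Q hQ => margX'Y_pmf hQ) (η / 4) hη4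
  obtain ⟨d4, hd4, H4⟩ := unif_cont3 (f := fun Q : X → X → Y → ℝ => mutInf (margXX Q))
    (mutInf_contOn.comp cXX.continuousOn fun Q hQ => margXX_pmf hQ) (η / 4) hη4
  obtain ⟨t, ht0, ht1, htd1, htd2, htd3, htd4⟩ : ∃ t : ℝ, 0 < t ∧ t < 1 ∧ t ≤ d1 ∧ t ≤ d2 ∧ t ≤ d3 ∧
      t ≤ d4 := by
    refine ⟨min (1/2) (min (min d1 d2) (min d3 d4)), by positivity, ?_, ?_, ?_, ?_, ?_⟩
    · exact lt_of_le_of_lt (min_le_left _ _) (by norm_num)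
    · exact (min_le_right _ _).trans ((min_le_left _ _).trans (min_le_left _ _))
    · exact (min_le_right _ _).trans ((min_le_left _ _).trans (min_le_right _ _))
    · exact (min_le_right _ _).trans ((min_le_right _ _).trans (min_le_left _ _))
    · exact (min_le_right _ _).trans ((min_le_right _ _).trans (min_le_right _ _))
  refine ⟨t * R, by positivity, fun Q hQ hm1 hm2 hI => ?_⟩
  obtain ⟨k1, k2, k3, k4⟩ := mix3_props t ht0.le ht1.le Q QX hQX hQ
  set Q' := mix3 t Q QX (margY3 Q) with hQ'
  have hI' : mutInf (margXX Q') ≤ R := by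
    rw [k2]
    refine (mix_mutInf t ht0.le ht1.le _ _ _ (margXX_pmf hQ) hm1 hm2).trans ?_
    have : (1 - t) * mutInf (margXX Q) ≤ (1 - t) * (R + t * R) := by
      gcongr
    nlinarith [mul_pos (mul_pos ht0 ht0) hR]
  have hE := Eex_le W hW g QX R Q' k1 (by rw [k2]; exact mix_margX _ _ _ _ hm1 hQX.2)
    (by rw [k2]; exact mix_margY _ _ _ _ hm2 hQX.2) hI'
  have hE' := EReal.coe_lt_coe_iff.mp (hc.trans_le hE)
  rw [k3] at hE'
  have a1 := H1 Q Q' hQ k1 fun x x' y => (k4 x x' y).trans htd1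
  have a2 := H2 Q Q' hQ k1 fun x x' y => (k4 x x' y).trans htd2
  have a3 := H3 Q Q' hQ k1 fun x x' y => (k4 x x' y).trans htd3
  have a4 := H4 Q Q' hQ k1 fun x x' y => (k4 x x' y).trans htd4
  simp only [abs_le] at a1 a2 a3 a4
  set α := alphaFun g QX R (margY3 Q)
  have hmax : max (max (g (margXY3 Q')) α - g (margX'Y3 Q')) 0 ≤
      max (max (g (margXY3 Q)) α - g (margX'Y3 Q)) 0 + η / 2 := by
    apply max_le
    · have : max (g (margXY3 Q')) α ≤ max (g (margXY3 Q)) α + η / 4 := by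
        apply max_le
        · linarith [le_max_left (g (margXY3 Q)) α]
        · linarith [le_max_right (g (margXY3 Q)) α]
      linarith [le_max_left (max (g (margXY3 Q)) α - g (margX'Y3 Q)) 0]
    · linarith [le_max_right (max (g (margXY3 Q)) α - g (margX'Y3 Q)) 0]
  unfold FF at *
  linarith

end three


section link
variable {ι X Y : Type*} [Fintype ι] [DecidableEq ι] [Fintype X] [Fintype Y] [DecidableEq X]
  [DecidableEq Y]

lemma empJoint_eq {n : ℕ} (x : Fin n → X) (y : Fin n → Y) (a : X) (b : Y) :
    empJoint x y a b = emp (zp x y) (a, b) := by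
  simp [empJoint, emp, cn, zp]

lemma unc_empJoint {n : ℕ} (x : Fin n → X) (y : Fin n → Y) :
    unc (empJoint x y) = emp (zp x y) := by
  funext p; exact empJoint_eq x y p.1 p.2

lemma empPMF_eq {n : ℕ} (x : Fin n → X) : empPMF x = emp x := rfl

lemma emp_nonneg {n : ℕ} (z : Fin n → ι) (j : ι) : 0 ≤ emp z j := by unfold emp; positivity

lemma emp_sum {n : ℕ} (hn : 0 < n) (z : Fin n → ι) : ∑ j, emp z j = 1 := by
  have hs : ∑ j, (cn z j : ℝ) = n := by exact_mod_cast cn_sum z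
  have hn' : (n:ℝ) ≠ 0 := by exact_mod_cast hn.ne'
  simp only [emp, ← Finset.sum_div, hs]
  field_simp

lemma empJoint_margX {n : ℕ} (x : Fin n → X) (y : Fin n → Y) : margX (empJoint x y) = emp x := by
  funext a
  simp only [margX, empJoint_eq, emp, ← Finset.sum_div]
  rw [← cn_fst x y a]; push_cast; rfl

lemma empJoint_margY {n : ℕ} (x : Fin n → X) (y : Fin n → Y) : margY (empJoint x y) = emp y := by
  funext a
  simp only [margY, empJoint_eq, emp, ← Finset.sum_div]
  rw [← cn_snd x y a]; push_cast; rfl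

lemma empJoint_pmf {n : ℕ} (hn : 0 < n) (x : Fin n → X) (y : Fin n → Y) :
    IsJointPMF (empJoint x y) := by
  refine ⟨fun a b => by rw [empJoint_eq]; exact emp_nonneg _ _, ?_⟩
  change ∑ a, margX (empJoint x y) a = 1
  rw [empJoint_margX, emp_sum hn]

lemma mutInf_emp {n : ℕ} (hn : 0 < n) (x : Fin n → X) (y : Fin n → Y) :
    mutInf (empJoint x y) = mi x y := by
  rw [mutInf_eq _ (empJoint_pmf hn x y).1, empJoint_margX, empJoint_margY, unc_empJoint]; rfl

/-- joint empirical pmf of three sequences -/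
noncomputable def emp3 {n : ℕ} (x x' : Fin n → X) (y : Fin n → Y) : X → X → Y → ℝ :=
  fun a a' b => emp (zp y (zp x x')) (b, (a, a'))

lemma sum_cn_mul {n : ℕ} (z : Fin n → ι) (f : ι → ℝ) : ∑ j, (cn z j : ℝ) * f j = ∑ i, f (z i) := by
  simp only [cn_eq_sum]
  push_cast
  simp only [Finset.sum_mul]
  rw [Finset.sum_comm]
  refine Finset.sum_congr rfl fun i _ => ?_
  simp

lemma emp3_XX {n : ℕ} (x x' : Fin n → X) (y : Fin n → Y) :
    margXX (emp3 x x' y) = empJoint x x' := by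
  funext a a'
  rw [empJoint_eq]
  simp only [margXX, emp3, emp, ← Finset.sum_div]
  rw [← cn_snd y (zp x x') (a, a')]; push_cast; rfl

lemma emp3_XY {n : ℕ} (x x' : Fin n → X) (y : Fin n → Y) :
    margXY3 (emp3 x x' y) = empJoint x y := by
  funext a b
  rw [empJoint_eq]
  simp only [margXY3, emp3, emp, ← Finset.sum_div]
  congr 1
  norm_cast
  simp only [cn_eq_sum, zp]
  rw [Finset.sum_comm]
  refine Finset.sum_congr rfl fun i _ => ?_
  simp only [Prod.mk.injEq]
  by_cases h : x i = a <;> by_cases h' : y i = b <;> simp [h, h']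

lemma emp3_X'Y {n : ℕ} (x x' : Fin n → X) (y : Fin n → Y) :
    margX'Y3 (emp3 x x' y) = empJoint x' y := by
  funext a b
  rw [empJoint_eq]
  simp only [margX'Y3, emp3, emp, ← Finset.sum_div]
  congr 1
  norm_cast
  simp only [cn_eq_sum, zp]
  rw [Finset.sum_comm]
  refine Finset.sum_congr rfl fun i _ => ?_
  simp only [Prod.mk.injEq]
  by_cases h : x' i = a <;> by_cases h' : y i = b <;> simp [h, h']

lemma emp3_Y {n : ℕ} (x x' : Fin n → X) (y : Fin n → Y) :
    margY3 (emp3 x x' y) = emp y := by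
  rw [← empJoint_margY x y, ← emp3_XY x x' y]; rfl

lemma emp3_pmf {n : ℕ} (hn : 0 < n) (x x' : Fin n → X) (y : Fin n → Y) :
    IsJointPMF3 (emp3 x x' y) := by
  refine ⟨fun a a' b => emp_nonneg _ _, ?_⟩
  change ∑ a, ∑ a', margXX (emp3 x x' y) a a' = 1
  rw [emp3_XX]; exact (empJoint_pmf hn x x').2

lemma prodW_eq {n : ℕ} (hn : 0 < n) (W : X → Y → ℝ) (hW : IsChannel W) (x x' : Fin n → X)
    (y : Fin n → Y) : ∏ i, W (x i) (y i) =
      Real.exp (n * ∑ a, ∑ a', ∑ b, emp3 x x' y a a' b * Real.log (W a b)) := by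
  have hn' : (n:ℝ) ≠ 0 := by exact_mod_cast hn.ne'
  have h := sum_cn_mul (zp y (zp x x')) (fun p => Real.log (W p.2.1 p.1))
  have e : (n:ℝ) * ∑ a, ∑ a', ∑ b, emp3 x x' y a a' b * Real.log (W a b)
      = ∑ j, (cn (zp y (zp x x')) j : ℝ) * Real.log (W j.2.1 j.1) := by
    symm
    rw [Fintype.sum_prod_type]
    simp only [Fintype.sum_prod_type, emp3, emp, Finset.mul_sum]
    rw [Finset.sum_comm]
    refine Finset.sum_congr rfl fun a _ => ?_
    rw [Finset.sum_comm]
    refine Finset.sum_congr rfl fun a' _ => Finset.sum_congr rfl fun b _ => ?_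
    field_simp
  rw [e, h, Real.exp_sum]
  refine Finset.prod_congr rfl fun i _ => ?_
  simp only [zp]
  rw [Real.exp_log ((hW _).1 _)]

lemma ysum {n : ℕ} (hn : 0 < n) (W : X → Y → ℝ) (hW : IsChannel W) (g : (X → Y → ℝ) → ℝ)
    (al : (Y → ℝ) → ℝ) (x x' : Fin n → X) (v : ℝ)
    (hv : ∀ y, v ≤ FF W g (al (margY3 (emp3 x x' y))) (emp3 x x' y)) :
    ∑ y : Fin n → Y, (∏ i, W (x i) (y i)) * Real.exp (-n *
      max (max (g (empJoint x y)) (al (emp y)) - g (empJoint x' y)) 0)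
    ≤ Real.exp ((Fintype.card Y * (Fintype.card X * Fintype.card X)) * ell n) *
      Real.exp (- n * v + (Fintype.card X * Fintype.card X) * ell n) := by
  classical
  have hL := card_types (Finset.univ : Finset (Fin n → Y)) (fun y => zp y (zp x x'))
  simp only [Fintype.card_prod, Nat.cast_mul] at hL
  refine sum_le_types Finset.univ (fun y : Fin n → Y => cn (zp y (zp x x'))) _ ?_ _ _
    (by positivity) ?_ hL
  · intro y1 _ y2 _ h
    have h3 : emp3 x x' y1 = emp3 x x' y2 := by
      funext a a' b
      simp only [emp3, emp]
      rw [h]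
    rw [prodW_eq hn W hW x x' y1, prodW_eq hn W hW x x' y2, ← emp3_XY x x' y1, ← emp3_XY x x' y2,
      ← emp3_X'Y x x' y1, ← emp3_X'Y x x' y2, ← emp3_Y x x' y1, ← emp3_Y x x' y2, h3]
  · intro y _
    have hb := (cond_card_log hn y (zp x x')).1
    have hv' := hv y
    unfold FF at hv'
    rw [obj_eq W _ (emp3_pmf hn x x' y).1, emp3_XX, unc_empJoint, emp3_XY, emp3_X'Y, emp3_Y] at hv'
    have e : ent (unc (pr3 (emp3 x x' y))) = ent (emp (zp y (zp x x'))) := by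
      simp only [ent, unc, pr3, emp3, neg_inj]
      exact Fintype.sum_equiv (Equiv.prodComm _ _) _ _ (fun p => rfl)
    rw [e] at hv'
    rw [prodW_eq hn W hW x x' y, ← Real.exp_add]
    refine (mul_le_mul_of_nonneg_right hb (Real.exp_pos _).le).trans ?_
    rw [← Real.exp_add]
    apply Real.exp_le_exp.mpr
    rw [Fintype.card_prod, Nat.cast_mul]
    have hn' : (0:ℝ) < n := by exact_mod_cast hn
    have := mul_le_mul_of_nonneg_left hv' hn'.le
    nlinarith

lemma quant {n : ℕ} (hn : 0 < n) (QX : X → ℝ)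
    (hk : ∀ a, ∃ k : ℕ, (n : ℝ) * QX a = (k : ℝ)) (y : Fin n → Y) (Q : X → Y → ℝ)
    (hQ : IsJointPMF Q) (h1 : margX Q = QX) (h2 : margY Q = emp y) :
    ∃ x : Fin n → X, emp x = QX ∧
      ∀ a b, |empJoint x y a b - Q a b| ≤ (Fintype.card Y + 1) / n := by
  have hn' : (0:ℝ) < n := by exact_mod_cast hn
  choose K hK using hk
  set f : X → Y → ℕ := fun a b => ⌊(n:ℝ) * Q a b⌋₊ with hf
  have hfl : ∀ a b, (f a b : ℝ) ≤ n * Q a b := fun a b =>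
    Nat.floor_le (mul_nonneg hn'.le (hQ.1 a b))
  have hfu : ∀ a b, (n:ℝ) * Q a b < f a b + 1 := fun a b => Nat.lt_floor_add_one _
  have hrow : ∀ a, (n:ℝ) * ∑ b, Q a b = K a := fun a => by
    rw [← hK a, ← h1]; rfl
  have hcol : ∀ b, (n:ℝ) * ∑ a, Q a b = cn y b := fun b => by
    have : ∑ a, Q a b = emp y b := congrFun h2 b
    rw [this]; unfold emp; field_simp
  have hr : ∀ a, ∑ b, f a b ≤ K a := fun a => by
    have : ((∑ b, f a b : ℕ) : ℝ) ≤ K a := by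
      rw [← hrow a, Finset.mul_sum]; push_cast
      exact Finset.sum_le_sum fun b _ => hfl a b
    exact_mod_cast this
  have hc : ∀ b, ∑ a, f a b ≤ cn y b := fun b => by
    have : ((∑ a, f a b : ℕ) : ℝ) ≤ cn y b := by
      rw [← hcol b, Finset.mul_sum]; push_cast
      exact Finset.sum_le_sum fun a _ => hfl a b
    exact_mod_cast this
  choose r hr' using fun a => Nat.exists_eq_add_of_le (hr a)
  choose c hc' using fun b => Nat.exists_eq_add_of_le (hc b)
  have hKn : ∑ a, K a = n := by
    have : ((∑ a, K a : ℕ) : ℝ) = n := by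
      push_cast
      simp only [← hrow, ← Finset.mul_sum, hQ.2, mul_one]
    exact_mod_cast this
  have htot : ∑ a, r a = ∑ b, c b := by
    have e1 : ∑ a, ∑ b, f a b + ∑ a, r a = n := by
      rw [← hKn, ← Finset.sum_add_distrib]; exact Finset.sum_congr rfl fun a _ => (hr' a).symm
    have e2 : ∑ b, ∑ a, f a b + ∑ b, c b = n := by
      rw [← cn_sum y, ← Finset.sum_add_distrib]; exact Finset.sum_congr rfl fun a _ => (hc' a).symm
    rw [Finset.sum_comm] at e2
    omega
  obtain ⟨u, hu⟩ := exists_seq (n := ∑ a, r a) r rfl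
  obtain ⟨v, hv⟩ := exists_seq (n := ∑ a, r a) c htot.symm
  obtain ⟨x, hx⟩ := exists_seq_cond (A := X) y (fun p => f p.1 p.2 + cn (zp u v) p) (by
    intro b
    rw [Finset.sum_add_distrib, cn_snd, hv, hc' b])
  have hcx : ∀ a, cn x a = K a := by
    intro a
    rw [← cn_fst x y a, hx, Finset.sum_add_distrib, cn_fst, hu, hr' a]
  refine ⟨x, ?_, ?_⟩
  · funext a
    simp only [emp, hcx, ← hK]; field_simp
  · intro a b
    rw [empJoint_eq]
    simp only [emp, hx]
    have h3 : cn (zp u v) (a, b) ≤ r a := by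
      rw [← congrFun hu a, ← cn_fst u v a]
      exact Finset.single_le_sum (f := fun b => cn (zp u v) (a, b)) (fun _ _ => Nat.zero_le _)
        (Finset.mem_univ b)
    have h4 : (r a : ℝ) ≤ Fintype.card Y := by
      have e1 : (K a : ℝ) = ∑ b, (f a b : ℝ) + r a := by
        rw [hr' a]; push_cast; rfl
      have e2 : (n:ℝ) * ∑ b, Q a b ≤ ∑ b, ((f a b : ℝ) + 1) := by
        rw [Finset.mul_sum]; exact Finset.sum_le_sum fun b _ => (hfu a b).le
      rw [Finset.sum_add_distrib, hrow, e1] at e2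
      simp only [Finset.sum_const, Finset.card_univ, nsmul_eq_mul, mul_one] at e2
      linarith
    have h5 : (cn (zp u v) (a, b) : ℝ) ≤ r a := by exact_mod_cast h3
    have e : ((f a b + cn (zp u v) (a, b) : ℕ) : ℝ) / n - Q a b
        = ((f a b : ℝ) + cn (zp u v) (a, b) - n * Q a b) / n := by
      push_cast; field_simp
    rw [e, abs_div, abs_of_pos hn']
    gcongr
    have := hfl a b
    have := hfu a b
    have h6 : (0:ℝ) ≤ cn (zp u v) (a, b) := by positivity
    rw [abs_le]
    constructor <;> linarith

lemma joint_le_one {A B : Type*} [Fintype A] [Fintype B] {Q : A → B → ℝ} (hQ : IsJointPMF Q)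
    (a : A) (b : B) : Q a b ≤ 1 := by
  have h1 : Q a b ≤ ∑ b, Q a b :=
    Finset.single_le_sum (f := fun b => Q a b) (fun b _ => hQ.1 a b) (Finset.mem_univ b)
  have h2 : ∑ b, Q a b ≤ ∑ a, ∑ b, Q a b :=
    Finset.single_le_sum (f := fun a => ∑ b, Q a b)
      (fun a _ => Finset.sum_nonneg fun b _ => hQ.1 a b) (Finset.mem_univ a)
  linarith [hQ.2]

lemma alpha_approx (g : (X → Y → ℝ) → ℝ)
    (hg : ContinuousOn g {Q : X → Y → ℝ | IsJointPMF Q}) (QX : X → ℝ) (hQX : IsPMF QX)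
    (R : ℝ) (hR : 0 < R) (η : ℝ) (hη : 0 < η) :
    ∃ ε > 0, ∃ N : ℕ, ∀ n ≥ N, 0 < n → (∀ a, ∃ k : ℕ, (n : ℝ) * QX a = (k : ℝ)) →
      ∀ y : Fin n → Y, ∃ x : Fin n → X, emp x = QX ∧ mi x y ≤ R - ε ∧
        alphaFun g QX R (emp y) ≤ g (empJoint x y) - mi x y + R + η := by
  have hη8 : 0 < η / 8 := by positivity
  obtain ⟨d1, hd1, H1⟩ := unif_cont hg (η / 8) hη8
  obtain ⟨d2, hd2, H2⟩ := unif_cont (mutInf_contOn (A := X) (B := Y)) (η / 8) hη8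
  obtain ⟨t, ht0, ht1, htd1, htd2⟩ : ∃ t : ℝ, 0 < t ∧ t < 1 ∧ t ≤ d1 ∧ t ≤ d2 := by
    refine ⟨min (1/2) (min d1 d2), by positivity, ?_, ?_, ?_⟩
    · exact lt_of_le_of_lt (min_le_left _ _) (by norm_num)
    · exact (min_le_right _ _).trans (min_le_left _ _)
    · exact (min_le_right _ _).trans (min_le_right _ _)
  obtain ⟨d3, hd3, H3⟩ := unif_cont (mutInf_contOn (A := X) (B := Y)) (t * R / 2) (by positivity)
  obtain ⟨N, hN⟩ := exists_nat_gt ((Fintype.card Y + 1 : ℝ) / (min d1 (min d2 d3)))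
  refine ⟨t * R / 2, by positivity, N, fun n hn hn0 hk y => ?_⟩
  have hn' : (0:ℝ) < n := by exact_mod_cast hn0
  have hdm : 0 < min d1 (min d2 d3) := by positivity
  have hsmall : (Fintype.card Y + 1 : ℝ) / n ≤ min d1 (min d2 d3) := by
    rw [div_le_iff₀ hn']
    rw [div_lt_iff₀ hdm] at hN
    have : (N:ℝ) ≤ n := by exact_mod_cast hn
    nlinarith
  have hypmf : IsPMF (emp y) := ⟨emp_nonneg y, emp_sum hn0 y⟩
  obtain ⟨p1, p2, p3, p4⟩ := prod_pmf QX (emp y) hQX hypmf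
  obtain ⟨v, ⟨Q, hQ, hm1, hm2, hI, rfl⟩, hlt⟩ := exists_lt_of_lt_csSup
    (s := {v : ℝ | ∃ Q : X → Y → ℝ, IsJointPMF Q ∧ margX Q = QX ∧ margY Q = emp y ∧
      mutInf Q ≤ R ∧ v = g Q - mutInf Q + R}) (b := alphaFun g QX R (emp y) - η / 8)
    ⟨_, _, p1, p2, p3, by rw [p4]; exact hR.le, rfl⟩ (by
      change _ < alphaFun g QX R (emp y)
      linarith)
  have m1 := mix_pmf t ht0.le ht1.le Q QX (emp y) hQ hm1 hm2
  have m2 := mix_mutInf t ht0.le ht1.le Q QX (emp y) hQ hm1 hm2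
  set Q' := mix t Q QX (emp y) with hQ'
  have hdist : ∀ a b, |Q a b - Q' a b| ≤ t := by
    intro a b
    have e : Q a b - Q' a b = t * (Q a b - QX a * emp y b) := by rw [hQ']; unfold mix; ring
    rw [e, abs_mul, abs_of_pos ht0]
    have b1 := hQ.1 a b
    have b2 := joint_le_one hQ a b
    have b3 := p1.1 a b
    have b4 := joint_le_one p1 a b
    have : |Q a b - QX a * emp y b| ≤ 1 := abs_le.mpr ⟨by linarith, by linarith⟩
    nlinarith
  obtain ⟨x, hx, hxd⟩ := quant hn0 QX hk y Q' m1 (mix_margX _ _ _ _ hm1 hypmf.2)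
    (mix_margY _ _ _ _ hm2 hQX.2)
  have hE := empJoint_pmf hn0 x y
  have a1 := H1 Q Q' hQ m1 fun a b => (hdist a b).trans htd1
  have a2 := H2 Q Q' hQ m1 fun a b => (hdist a b).trans htd2
  have a3 := H1 _ Q' hE m1 fun a b => (hxd a b).trans (hsmall.trans (min_le_left _ _))
  have a4 := H2 _ Q' hE m1 fun a b => (hxd a b).trans (hsmall.trans
    ((min_le_right _ _).trans (min_le_left _ _)))
  have a5 := H3 _ Q' hE m1 fun a b => (hxd a b).trans (hsmall.trans
    ((min_le_right _ _).trans (min_le_right _ _)))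
  rw [mutInf_emp hn0] at a4 a5
  simp only [abs_le] at a1 a2 a3 a4 a5
  refine ⟨x, hx, ?_, ?_⟩
  · have : (1 - t) * mutInf Q ≤ (1 - t) * R := by gcongr
    linarith
  · linarith

end link


section perr
variable {X Y : Type*} [Fintype X] [Fintype Y] [DecidableEq X] [DecidableEq Y]

lemma Perr_mono {n M K : ℕ} (W : X → Y → ℝ) (hW : IsChannel W) (g : (X → Y → ℝ) → ℝ)
    (C : Fin K → Fin n → X) (j : Fin M → Fin K) (hj : Function.Injective j) (m : Fin M) :
    Perr W g (fun i => C (j i)) m ≤ Perr W g C (j m) := by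
  unfold Perr
  rw [Finset.sum_comm, Finset.sum_comm (s := Finset.univ.filter (fun m' => m' ≠ j m))]
  refine Finset.sum_le_sum fun y _ => ?_
  rw [← Finset.sum_div, ← Finset.sum_div, ← Finset.mul_sum, ← Finset.mul_sum, mul_div_assoc,
    mul_div_assoc]
  have hWp : 0 ≤ ∏ i, W (C (j m) i) (y i) := Finset.prod_nonneg fun i _ => ((hW _).1 _).le
  refine mul_le_mul_of_nonneg_left ?_ hWp
  set e : Fin K → ℝ := fun k => Real.exp ((n:ℝ) * g (empJoint (C k) y)) with he
  have hpos : ∀ k, 0 < e k := fun k => Real.exp_pos _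
  have d1 : ∑ i, e (j i) = e (j m) + ∑ i ∈ Finset.univ.filter (fun m' => m' ≠ m), e (j i) := by
    rw [← Finset.add_sum_erase _ _ (Finset.mem_univ m)]
    congr 1
    refine Finset.sum_congr ?_ fun _ _ => rfl
    ext; simp
  have d2 : ∑ i, e i = e (j m) + ∑ i ∈ Finset.univ.filter (fun m' => m' ≠ j m), e i := by
    rw [← Finset.add_sum_erase _ _ (Finset.mem_univ (j m))]
    congr 1
    refine Finset.sum_congr ?_ fun _ _ => rfl
    ext; simp
  change (∑ i ∈ Finset.univ.filter (fun m' => m' ≠ m), e (j i)) / ∑ i, e (j i) ≤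
    (∑ i ∈ Finset.univ.filter (fun m' => m' ≠ j m), e i) / ∑ i, e i
  rw [d1, d2]
  have hle : ∑ i ∈ Finset.univ.filter (fun m' => m' ≠ m), e (j i)
      ≤ ∑ i ∈ Finset.univ.filter (fun m' => m' ≠ j m), e i := by
    rw [← Finset.sum_image (f := e) (g := j) (fun a _ b _ h => hj h)]
    refine Finset.sum_le_sum_of_subset_of_nonneg ?_ fun i _ _ => (hpos i).le
    intro k hk
    obtain ⟨i, hi, rfl⟩ := Finset.mem_image.mp hk
    simp only [Finset.mem_filter, Finset.mem_univ, true_and] at hi ⊢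
    exact fun h => hi (hj h)
  have h0 : 0 ≤ ∑ i ∈ Finset.univ.filter (fun m' => m' ≠ m), e (j i) :=
    Finset.sum_nonneg fun i _ => (hpos _).le
  have := hpos (j m)
  rw [div_le_div_iff₀ (by positivity) (by linarith)]
  nlinarith

lemma Perr_le {n K : ℕ} (W : X → Y → ℝ) (hW : IsChannel W) (g : (X → Y → ℝ) → ℝ)
    (C : Fin K → Fin n → X) (m : Fin K) (al : (Y → ℝ) → ℝ)
    (hal : ∀ y : Fin n → Y, Real.exp (n * al (emp y)) ≤ ∑ k, Real.exp (n * g (empJoint (C k) y))) :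
    Perr W g C m ≤ ∑ m' ∈ Finset.univ.filter (fun m' => m' ≠ m), ∑ y : Fin n → Y,
      (∏ i, W (C m i) (y i)) * Real.exp (-n *
        max (max (g (empJoint (C m) y)) (al (emp y)) - g (empJoint (C m') y)) 0) := by
  unfold Perr
  refine Finset.sum_le_sum fun m' _ => Finset.sum_le_sum fun y _ => ?_
  rw [mul_div_assoc]
  have hWp : 0 ≤ ∏ i, W (C m i) (y i) := Finset.prod_nonneg fun i _ => ((hW _).1 _).le
  refine mul_le_mul_of_nonneg_left ?_ hWp
  have hD : ∀ k, Real.exp (n * g (empJoint (C k) y))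
      ≤ ∑ k, Real.exp ((n:ℝ) * g (empJoint (C k) y)) := fun k =>
    Finset.single_le_sum (f := fun k => Real.exp ((n:ℝ) * g (empJoint (C k) y)))
      (fun _ _ => (Real.exp_pos _).le) (Finset.mem_univ k)
  set D := ∑ k, Real.exp ((n:ℝ) * g (empJoint (C k) y))
  have hDpos : 0 < D := (Real.exp_pos _).trans_le (hD m)
  have key : ∀ u : ℝ, Real.exp (n * u) ≤ D → Real.exp (n * g (empJoint (C m') y)) / D ≤
      Real.exp (-n * (u - g (empJoint (C m') y))) := by
    intro u hu
    rw [div_le_iff₀ hDpos]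
    calc Real.exp (n * g (empJoint (C m') y))
        = Real.exp (-n * (u - g (empJoint (C m') y))) * Real.exp (n * u) := by
          rw [← Real.exp_add]; congr 1; ring
      _ ≤ _ := by gcongr
  have k3 := key (g (empJoint (C m') y)) (hD m')
  rcases max_cases (max (g (empJoint (C m) y)) (al (emp y)) - g (empJoint (C m') y)) 0 with h | h
  · rw [h.1]
    rcases max_cases (g (empJoint (C m) y)) (al (emp y)) with h' | h'
    · rw [h'.1]; exact key _ (hD m)
    · rw [h'.1]; exact key _ (hal y)
  · rw [h.1]; simpa using k3

lemma Perr_pos {n M : ℕ} (hM : 2 ≤ M) [Nonempty Y] (W : X → Y → ℝ) (hW : IsChannel W)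
    (g : (X → Y → ℝ) → ℝ) (C : Fin M → Fin n → X) (m : Fin M) : 0 < Perr W g C m := by
  unfold Perr
  have hterm : ∀ m' : Fin M, 0 < ∑ y : Fin n → Y,
      (∏ i, W (C m i) (y i)) * Real.exp ((n : ℝ) * g (empJoint (C m') y)) /
      (∑ mt, Real.exp ((n : ℝ) * g (empJoint (C mt) y))) := by
    intro m'
    refine Finset.sum_pos (fun y _ => ?_) Finset.univ_nonempty
    refine div_pos (mul_pos (Finset.prod_pos fun i _ => (hW _).1 _) (Real.exp_pos _)) ?_
    exact Finset.sum_pos (fun _ _ => Real.exp_pos _) ⟨m, Finset.mem_univ m⟩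
  refine Finset.sum_pos (fun m' _ => hterm m') ?_
  have : Nontrivial (Fin M) := Fin.nontrivial_iff_two_le.mpr hM
  obtain ⟨m', hm'⟩ := exists_ne m
  exact ⟨m', by simp [hm']⟩

end perr

section random
variable {T : Type*} [Fintype T] [Nonempty T]

lemma sum_pair_le {K : ℕ} (f : T → T → ℝ) (Bd : ℝ)
    (hf : ∀ t, ∑ t', f t t' ≤ Fintype.card T * Bd) (m m' : Fin K) (h : m' ≠ m) :
    ∑ C : Fin K → T, f (C m) (C m') ≤ (Fintype.card T : ℝ) ^ K * Bd := by
  have hK : K ≠ 0 := fun h0 => by subst h0; exact m.elim0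
  rw [← Fintype.sum_equiv (Equiv.funSplitAt m' T).symm
    (fun p : T × ({j // j ≠ m'} → T) => f (p.2 ⟨m, h.symm⟩) p.1) (fun C => f (C m) (C m'))
    (fun p => by simp [Equiv.funSplitAt, Equiv.piSplitAt, h.symm])]
  rw [Fintype.sum_prod_type, Finset.sum_comm]
  calc _ ≤ ∑ q : {j // j ≠ m'} → T, (Fintype.card T : ℝ) * Bd :=
        Finset.sum_le_sum fun q _ => hf _
    _ = _ := by
        simp only [Finset.sum_const, Finset.card_univ, Fintype.card_fun, nsmul_eq_mul]
        simp only [Fintype.card_subtype_compl, Fintype.card_fin, Fintype.card_unique]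
        rw [← mul_assoc]
        push_cast
        rw [← pow_succ, Nat.sub_add_cancel (Nat.one_le_iff_ne_zero.mpr hK)]

open Classical in
lemma sum_half {K : ℕ} (A : T → Prop) (q : ℝ)
    (hq : q * Fintype.card T ≤ K * (Finset.univ.filter A).card) :
    ∑ C : Fin K → T, ((1:ℝ)/2) ^ (Finset.univ.filter (fun i => A (C i))).card
      ≤ (Fintype.card T : ℝ) ^ K * Real.exp (-q / 2) := by
  have hT : (0:ℝ) < Fintype.card T := by exact_mod_cast Fintype.card_pos
  have e1 : ∀ C : Fin K → T, ((1:ℝ)/2) ^ (Finset.univ.filter (fun i => A (C i))).card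
      = ∏ i, (if A (C i) then (1:ℝ)/2 else 1) := by
    intro C
    rw [Finset.prod_ite]
    simp
  simp only [e1]
  have e2 : ∑ C : Fin K → T, ∏ i, (if A (C i) then (1:ℝ)/2 else 1)
      = (∑ t : T, (if A t then (1:ℝ)/2 else 1)) ^ K := by
    have h := Finset.prod_univ_sum (κ := fun _ : Fin K => T)
      (t := fun _ : Fin K => (Finset.univ : Finset T))
      (f := fun (_ : Fin K) t => if A t then (1:ℝ)/2 else 1)
    rw [Fintype.piFinset_univ] at h
    rw [← h]
    simp
  rw [e2]
  have e3 : ∑ t : T, (if A t then (1:ℝ)/2 else 1)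
      = Fintype.card T * (1 - (Finset.univ.filter A).card / (2 * Fintype.card T)) := by
    have : ∀ t, (if A t then (1:ℝ)/2 else 1) = 1 - (1/2) * (if A t then 1 else 0) := by
      intro t; split_ifs <;> norm_num
    simp only [this, Finset.sum_sub_distrib, ← Finset.mul_sum]
    rw [Finset.sum_boole]
    simp only [Finset.sum_const, Finset.card_univ, nsmul_eq_mul, mul_one]
    field_simp
  rw [e3, mul_pow]
  gcongr
  set r : ℝ := (Finset.univ.filter A).card / (2 * Fintype.card T) with hr
  have hle : ((Finset.univ.filter A).card : ℝ) ≤ Fintype.card T := by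
    exact_mod_cast Finset.card_le_univ _
  have hr1 : r ≤ 1 := by
    rw [hr, div_le_one (by positivity)]; linarith
  calc (1 - r) ^ K ≤ (Real.exp (-r)) ^ K := by
        gcongr
        exact Real.one_sub_le_exp_neg r
    _ = Real.exp (-(K * r)) := by rw [← Real.exp_nat_mul]; congr 1; ring
    _ ≤ _ := by
        apply Real.exp_le_exp.mpr
        have : q / 2 ≤ K * r := by
          rw [hr, ← mul_div_assoc, div_le_div_iff₀ (by norm_num) (by positivity)]
          nlinarith
        linarith

open Classical in
lemma random_code {K : ℕ} (hK : 0 < K) {E : Type*} (s : Finset E) (A : E → T → Prop) (q : E → ℝ)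
    (qmin : ℝ) (hqm : ∀ e ∈ s, qmin ≤ q e)
    (hq : ∀ e ∈ s, q e * Fintype.card T ≤ K * (Finset.univ.filter (A e)).card)
    (hs : (s.card : ℝ) * Real.exp (-qmin / 4) < 1 / 2)
    (f : T → T → ℝ) (hf0 : ∀ t t', 0 ≤ f t t') (Bd : ℝ) (hBd : 0 < Bd)
    (hf : ∀ t, ∑ t', f t t' ≤ Fintype.card T * Bd) :
    ∃ C : Fin K → T, (∀ e ∈ s, q e / 4 ≤ (Finset.univ.filter (fun i => A e (C i))).card) ∧
      ∑ m, ∑ m' ∈ Finset.univ.filter (fun m' => m' ≠ m), f (C m) (C m') ≤ 2 * (K:ℝ)^2 * Bd := by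
  have hT : (0:ℝ) < Fintype.card T := by exact_mod_cast Fintype.card_pos
  have hK' : (0:ℝ) < K := by exact_mod_cast hK
  set Φ1 : (Fin K → T) → ℝ := fun C => ∑ e ∈ s,
    ((1:ℝ)/2) ^ (Finset.univ.filter (fun i => A e (C i))).card * Real.exp (q e / 4) with hΦ1
  set Φ2 : (Fin K → T) → ℝ := fun C =>
    ∑ m, ∑ m' ∈ Finset.univ.filter (fun m' => m' ≠ m), f (C m) (C m') with hΦ2
  have b1 : ∑ C, Φ1 C < (Fintype.card T : ℝ) ^ K * (1/2) := by
    simp only [hΦ1]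
    rw [Finset.sum_comm]
    calc _ ≤ ∑ e ∈ s, (Fintype.card T : ℝ) ^ K * Real.exp (-qmin / 4) := by
          refine Finset.sum_le_sum fun e he => ?_
          rw [← Finset.sum_mul]
          refine (mul_le_mul_of_nonneg_right (sum_half (A e) (q e) (hq e he))
            (Real.exp_pos _).le).trans ?_
          rw [mul_assoc, ← Real.exp_add]
          gcongr
          linarith [hqm e he]
      _ = (Fintype.card T : ℝ) ^ K * (s.card * Real.exp (-qmin / 4)) := by
          rw [Finset.sum_const, nsmul_eq_mul]; ring
      _ < _ := by gcongr
  have b2 : ∑ C, Φ2 C ≤ (Fintype.card T : ℝ) ^ K * ((K:ℝ)^2 * Bd) := by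
    simp only [hΦ2]
    rw [Finset.sum_comm]
    calc _ ≤ ∑ m : Fin K, (K:ℝ) * ((Fintype.card T : ℝ) ^ K * Bd) := by
          refine Finset.sum_le_sum fun m _ => ?_
          rw [Finset.sum_comm]
          calc _ ≤ ∑ m' ∈ Finset.univ.filter (fun m' : Fin K => m' ≠ m),
                ((Fintype.card T : ℝ) ^ K * Bd) := by
                refine Finset.sum_le_sum fun m' hm' => ?_
                exact sum_pair_le f Bd hf m m' (Finset.mem_filter.mp hm').2
            _ ≤ _ := by
                rw [Finset.sum_const, nsmul_eq_mul]
                gcongr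
                exact_mod_cast (Finset.card_le_univ _).trans (by simp)
      _ = _ := by
          simp only [Finset.sum_const, Finset.card_univ, Fintype.card_fin, nsmul_eq_mul]
          ring
  obtain ⟨C, -, hC⟩ : ∃ C ∈ (Finset.univ : Finset (Fin K → T)),
      Φ1 C + Φ2 C / (2 * (K:ℝ)^2 * Bd) < 1 := by
    refine Finset.exists_lt_of_sum_lt ?_
    rw [Finset.sum_add_distrib, ← Finset.sum_div]
    have : (∑ C, Φ2 C) / (2 * (K:ℝ)^2 * Bd) ≤ (Fintype.card T : ℝ) ^ K * (1/2) := by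
      rw [div_le_iff₀ (by positivity)]
      refine b2.trans (le_of_eq ?_)
      ring
    simp only [Finset.sum_const, Finset.card_univ, Fintype.card_fun, Fintype.card_fin, nsmul_eq_mul,
      mul_one]
    push_cast
    linarith
  have n1 : 0 ≤ Φ1 C := Finset.sum_nonneg fun e _ => by positivity
  have n2 : 0 ≤ Φ2 C := Finset.sum_nonneg fun m _ => Finset.sum_nonneg fun m' _ => hf0 _ _
  refine ⟨C, fun e he => ?_, ?_⟩
  · have h1 : ((1:ℝ)/2) ^ (Finset.univ.filter (fun i => A e (C i))).card * Real.exp (q e / 4)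
        ≤ Φ1 C := Finset.single_le_sum (f := fun e =>
        ((1:ℝ)/2) ^ (Finset.univ.filter (fun i => A e (C i))).card * Real.exp (q e / 4))
        (fun e _ => by positivity) he
    have h2 : 0 ≤ Φ2 C / (2 * (K:ℝ)^2 * Bd) := by positivity
    have h3 := (h1.trans (by linarith : Φ1 C ≤ 1))
    set N := (Finset.univ.filter (fun i => A e (C i))).card
    have h4 : Real.exp (-(N:ℝ)) ≤ ((1:ℝ)/2) ^ N := by
      have : Real.exp (-(N:ℝ)) = (Real.exp (-1)) ^ N := by rw [← Real.exp_nat_mul]; congr 1; ring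
      rw [this]
      gcongr
      rw [Real.exp_neg]
      rw [one_div]
      apply inv_anti₀ (by norm_num)
      linarith [Real.add_one_le_exp 1]
    have h5 : Real.exp (-(N:ℝ) + q e / 4) ≤ 1 := by
      rw [Real.exp_add]
      exact (mul_le_mul_of_nonneg_right h4 (Real.exp_pos _).le).trans h3
    rw [Real.exp_le_one_iff] at h5
    linarith
  · have h2 : Φ2 C / (2 * (K:ℝ)^2 * Bd) ≤ 1 := by linarith
    rwa [div_le_one (by positivity)] at h2

/-- deterministic Markov argument -/
lemma exists_half {M : ℕ} (S : Fin (2 * M) → ℝ) (hS : ∀ m, 0 ≤ S m) (V : ℝ) (hV : 0 < V)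
    (h : ∑ m, S m ≤ M * V) : ∃ j : Fin M → Fin (2 * M), Function.Injective j ∧ ∀ i, S (j i) ≤ V := by
  classical
  set G := Finset.univ.filter (fun m => S m ≤ V) with hG
  set Bc := Finset.univ.filter (fun m => ¬ S m ≤ V) with hB
  have hcard : G.card + Bc.card = 2 * M := by
    rw [hG, hB, Finset.card_filter_add_card_filter_not]; simp
  have hBM : Bc.card ≤ M := by
    have : (Bc.card : ℝ) * V ≤ M * V := by
      calc (Bc.card : ℝ) * V = ∑ m ∈ Bc, V := by simp
        _ ≤ ∑ m ∈ Bc, S m := Finset.sum_le_sum fun m hm => by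
            have := (Finset.mem_filter.mp hm).2; linarith
        _ ≤ ∑ m, S m := Finset.sum_le_sum_of_subset_of_nonneg (Finset.subset_univ _)
            fun m _ _ => hS m
        _ ≤ _ := h
    have := le_of_mul_le_mul_right this hV
    exact_mod_cast this
  have hGM : M ≤ G.card := by omega
  refine ⟨fun i => G.orderEmbOfFin rfl (Fin.castLE hGM i), ?_, fun i => ?_⟩
  · intro a b hab
    have := (G.orderEmbOfFin rfl).injective hab
    exact Fin.castLE_injective hGM this
  · have := G.orderEmbOfFin_mem rfl (Fin.castLE hGM i)
    exact (Finset.mem_filter.mp this).2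

end random


section final
variable {X Y : Type*} [Fintype X] [DecidableEq X] [Fintype Y] [DecidableEq Y]

lemma mi_comm {n : ℕ} (x : Fin n → X) (y : Fin n → Y) : mi x y = mi y x := by
  have h : ent (emp (zp x y)) = ent (emp (zp y x)) := by
    unfold ent
    congr 1
    refine Fintype.sum_equiv (Equiv.prodComm X Y) _ _ fun p => ?_
    have : emp (zp x y) p = emp (zp y x) ((Equiv.prodComm X Y) p) := by
      unfold emp cn zp
      congr 3
      ext i
      simp [Prod.ext_iff, and_comm]
    rw [this]
  unfold mi
  rw [h]; ring

lemma emp_eq_iff {n : ℕ} (hn : 0 < n) (x x' : Fin n → X) : emp x = emp x' ↔ cn x = cn x' := by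
  have hn' : (n:ℝ) ≠ 0 := by exact_mod_cast hn.ne'
  constructor
  · intro h
    funext a
    have := congrFun h a
    unfold emp at this
    rw [div_left_inj' hn'] at this
    exact_mod_cast this
  · intro h; unfold emp; rw [h]

lemma cn_zp_fst {n : ℕ} (x x' : Fin n → X) (y y' : Fin n → Y) (h : cn (zp x y) = cn (zp x' y')) :
    cn x = cn x' := by
  funext a
  rw [← cn_fst x y, ← cn_fst x' y', h]

lemma mi_congr {n : ℕ} (x x' : Fin n → X) (y : Fin n → Y) (h : cn (zp x y) = cn (zp x' y)) :
    mi x y = mi x' y := by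
  unfold mi emp
  rw [h, cn_zp_fst _ _ _ _ h]

lemma code_n [Nonempty X] {n : ℕ} (hn : 0 < n) (QX : X → ℝ) (x0 : Fin n → X) (hx0 : emp x0 = QX)
    (R ε : ℝ) (M : ℕ) (hM0 : 0 < M) (hM : Real.exp (n * R) ≤ 2 * M)
    (hs : ((Fintype.card X : ℝ) * Fintype.card Y) ^ n *
      Real.exp (- Real.exp (n * ε - (1 + Fintype.card X * Fintype.card Y) * ell n) / 4) < 1/2) :
    ∃ C : Fin (2 * M) → Fin n → X, (∀ m, emp (C m) = QX) ∧
      (∀ (x : Fin n → X) (y : Fin n → Y), emp x = QX → mi x y ≤ R - ε →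
        Real.exp (n * (R - mi x y) - (1 + Fintype.card X * Fintype.card Y) * ell n) / 4 ≤
          (Finset.univ.filter (fun i => cn (zp (C i) y) = cn (zp x y))).card) ∧
      ∃ j : Fin M → Fin (2 * M), Function.Injective j ∧ ∀ i,
        ∑ m' ∈ Finset.univ.filter (fun m' => m' ≠ j i), Real.exp (n * mi (C (j i)) (C m')) ≤
          8 * M * Real.exp ((Fintype.card X * Fintype.card X + 2 * Fintype.card X) * ell n) := by
  classical
  let T := {x : Fin n → X // emp x = QX}
  have hTne : Nonempty T := ⟨⟨x0, hx0⟩⟩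
  have hfil : ∀ t : Fin n → X, emp t = QX →
      Finset.univ.filter (fun x' : Fin n → X => cn x' = cn t)
        = Finset.univ.filter (fun x' : Fin n → X => emp x' = QX) := by
    intro t ht
    ext x'
    simp only [Finset.mem_filter, Finset.mem_univ, true_and]
    rw [← emp_eq_iff hn, ht]
  have hTc : ∀ t : Fin n → X, emp t = QX →
      (Finset.univ.filter (fun x' : Fin n → X => cn x' = cn t)).card = Fintype.card T := by
    intro t ht
    rw [hfil t ht, Fintype.card_subtype]
  set Bd := Real.exp ((Fintype.card X * Fintype.card X + 2 * Fintype.card X) * ell n) with hBd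
  obtain ⟨C, hC1, hC2⟩ := random_code (T := T) (K := 2 * M) (by omega)
    (Finset.univ.filter (fun e : (Fin n → X) × (Fin n → Y) => emp e.1 = QX ∧ mi e.1 e.2 ≤ R - ε))
    (fun e t => cn (zp t.1 e.2) = cn (zp e.1 e.2))
    (fun e => Real.exp (n * (R - mi e.1 e.2) - (1 + Fintype.card X * Fintype.card Y) * ell n))
    (Real.exp (n * ε - (1 + Fintype.card X * Fintype.card Y) * ell n))
    (by
      rintro ⟨x, y⟩ he
      simp only [Finset.mem_filter, Finset.mem_univ, true_and] at he
      apply Real.exp_le_exp.mpr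
      have : (n:ℝ) * ε ≤ n * (R - mi x y) :=
        mul_le_mul_of_nonneg_left (by linarith [he.2]) n.cast_nonneg
      simp only
      linarith)
    (by
      rintro ⟨x, y⟩ he
      simp only [Finset.mem_filter, Finset.mem_univ, true_and] at he
      obtain ⟨-, h2⟩ := frac_bounds hn x y
      simp only at h2 ⊢
      rw [hTc x he.1] at h2
      have hcard : (Finset.univ.filter (fun x' : Fin n → X => cn (zp x' y) = cn (zp x y))).card
          = (Finset.univ.filter (fun t : T => cn (zp t.1 y) = cn (zp x y))).card := by
        symm
        refine Finset.card_bij (fun t _ => t.1) ?_ ?_ ?_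
        · intro t ht; simpa using ht
        · intro a _ b _ h; exact Subtype.ext h
        · intro x' hx'
          simp only [Finset.mem_filter, Finset.mem_univ, true_and] at hx'
          refine ⟨⟨x', ?_⟩, ?_, rfl⟩
          · rw [← he.1, emp_eq_iff hn]; exact cn_zp_fst _ _ _ _ hx'
          · simpa using hx'
      rw [hcard] at h2
      have hx : Real.exp (n * (R - mi x y) - (1 + Fintype.card X * Fintype.card Y) * ell n)
          = Real.exp (n * R) *
            Real.exp (- n * mi x y - (1 + Fintype.card X * Fintype.card Y) * ell n) := by
        rw [← Real.exp_add]; congr 1; ring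
      rw [hx]
      push_cast
      calc _ = Real.exp (n * R) * ((Fintype.card T : ℝ) *
            Real.exp (- n * mi x y - (1 + Fintype.card X * Fintype.card Y) * ell n)) := by ring
        _ ≤ _ := by gcongr)
    (by
      refine lt_of_le_of_lt ?_ hs
      refine mul_le_mul_of_nonneg_right ?_ (Real.exp_pos _).le
      have : (Finset.univ.filter (fun e : (Fin n → X) × (Fin n → Y) =>
          emp e.1 = QX ∧ mi e.1 e.2 ≤ R - ε)).card ≤ (Fintype.card X * Fintype.card Y) ^ n := by
        refine (Finset.card_le_univ _).trans ?_
        simp [Fintype.card_prod, mul_pow]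
      exact_mod_cast this)
    (fun t t' => Real.exp (n * mi t.1 t'.1)) (fun _ _ => (Real.exp_pos _).le) Bd (Real.exp_pos _)
    (by
      intro t
      have e1 : ∑ t' : T, Real.exp (n * mi t.1 t'.1)
          = ∑ x ∈ Finset.univ.filter (fun x' : Fin n → X => emp x' = QX),
            Real.exp (n * mi x t.1) := by
        rw [Finset.sum_subtype (p := fun x' => emp x' = QX) _ (by simp)]
        refine Finset.sum_congr rfl fun t' _ => ?_
        rw [mi_comm]
      rw [e1]
      have := sum_le_types (Finset.univ.filter (fun x' : Fin n → X => emp x' = QX))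
        (fun x => cn (zp x t.1)) (fun x => Real.exp (n * mi x t.1))
        (by
          intro u _ v _ h
          have h' := mi_congr u v t.1 h
          rw [h'])
        (Fintype.card T * Real.exp ((Fintype.card X + Fintype.card X) * ell n))
        (Real.exp (Fintype.card (X × X) * ell n)) (by positivity)
        (by
          intro u hu
          simp only [Finset.mem_filter, Finset.mem_univ, true_and] at hu
          obtain ⟨h1, -⟩ := frac_bounds hn u t.1
          rw [hTc u hu] at h1
          refine le_trans ?_ h1
          refine mul_le_mul_of_nonneg_right ?_ (Real.exp_pos _).le
          have : (Finset.filter (fun v => cn (zp v t.1) = cn (zp u t.1))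
              (Finset.univ.filter (fun x' : Fin n → X => emp x' = QX))).card ≤
              (Finset.univ.filter (fun x' : Fin n → X => cn (zp x' t.1) = cn (zp u t.1))).card :=
            Finset.card_le_card (Finset.filter_subset_filter _ (Finset.subset_univ _))
          exact_mod_cast this)
        (card_types _ _)
      refine this.trans (le_of_eq ?_)
      rw [hBd, mul_left_comm, ← Real.exp_add, Fintype.card_prod]
      push_cast
      congr 2; ring)
  obtain ⟨j, hj, hjS⟩ := exists_half (M := M)
    (fun m => ∑ m' ∈ Finset.univ.filter (fun m' => m' ≠ m), Real.exp (n * mi (C m).1 (C m').1))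
    (fun m => Finset.sum_nonneg fun _ _ => (Real.exp_pos _).le) (8 * M * Bd)
    (by have := Real.exp_pos ((Fintype.card X * Fintype.card X + 2 * Fintype.card X) * ell n)
        have : (0:ℝ) < M := by exact_mod_cast hM0
        positivity)
    (by refine hC2.trans (le_of_eq ?_); push_cast; ring)
  refine ⟨fun m => (C m).1, fun m => (C m).2, ?_, j, hj, ?_⟩
  · intro x y hx hm
    have := hC1 (x, y) (by simp [hx, hm])
    exact this.trans (le_of_eq (by congr))
  · intro i
    exact le_of_eq_of_le (by congr) (hjS i)

end final


section asympt
variable {X Y : Type*} [Fintype X] [DecidableEq X] [Fintype Y] [DecidableEq Y]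

lemma ell_small (D ε : ℝ) (hD : 0 < D) (hε : 0 < ε) : ∀ᶠ n : ℕ in atTop, D * ell n ≤ ε * n := by
  have h0 : Tendsto (fun n : ℕ => (n:ℝ) + 1) atTop atTop :=
    tendsto_atTop_add_const_right _ _ tendsto_natCast_atTop_atTop
  have hc : 0 < ε / (2 * D) := by positivity
  have h1 := h0.eventually (Real.isLittleO_log_id_atTop.bound hc)
  have h2 := tendsto_natCast_atTop_atTop (R := ℝ) |>.eventually_ge_atTop (2 * D / ε + 1)
  filter_upwards [h1, h2] with n h1 h2
  have hn : (0:ℝ) ≤ n := n.cast_nonneg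
  have h3 : Real.log (n + 1) ≤ ε / (2 * D) * (n + 1) := by
    refine (le_abs_self _).trans ?_
    simp only [Real.norm_eq_abs, id] at h1
    rwa [abs_of_nonneg (by linarith : (0:ℝ) ≤ (n:ℝ) + 1)] at h1
  have h4 : D * Real.log (n + 1) ≤ ε * (n + 1) / 2 := by
    calc _ ≤ D * (ε / (2 * D) * (n + 1)) := by gcongr
      _ = _ := by field_simp
  have h5 : 2 * D + ε ≤ ε * n := by
    calc 2 * D + ε = ε * (2 * D / ε + 1) := by field_simp
      _ ≤ _ := by gcongr
  unfold ell
  linarith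

lemma hs_ev (a D ε : ℝ) (ha : 1 ≤ a) (hD : 0 < D) (hε : 0 < ε) : ∀ᶠ n : ℕ in atTop,
    a ^ n * Real.exp (- Real.exp (n * ε - D * ell n) / 4) < 1/2 := by
  have h2 := tendsto_natCast_atTop_atTop (R := ℝ) |>.eventually_ge_atTop
    (32 * (Real.log a + 1) / ε ^ 2)
  filter_upwards [ell_small D (ε/2) hD (by positivity), h2, eventually_ge_atTop 1] with n h1 h2 h3
  have hn : (1:ℝ) ≤ n := by exact_mod_cast h3
  have e1 : Real.exp (n * (ε/2)) ≤ Real.exp (n * ε - D * ell n) := by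
    apply Real.exp_le_exp.mpr; linarith
  have e2 : (n * (ε/2))^2 / 2 ≤ Real.exp (n * (ε/2)) := by
    have := Real.quadratic_le_exp_of_nonneg (x := n * (ε/2)) (by positivity)
    have h : (0:ℝ) ≤ n * (ε/2) := by positivity
    linarith
  have e3 : 32 * (Real.log a + 1) ≤ n * ε^2 := by
    rwa [div_le_iff₀ (by positivity)] at h2
  have e4 : (n:ℝ) * (32 * (Real.log a + 1)) ≤ n * (n * ε^2) := by gcongr
  have e5 : a ^ n = Real.exp (n * Real.log a) := by
    rw [Real.exp_nat_mul, Real.exp_log (by linarith)]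
  rw [e5, ← Real.exp_add]
  calc _ ≤ Real.exp (-1) := by
        apply Real.exp_le_exp.mpr; nlinarith
    _ < 1/2 := by
        rw [Real.exp_neg, inv_lt_comm₀ (Real.exp_pos _) (by norm_num)]
        have := Real.exp_one_gt_d9
        norm_num at this ⊢; linarith

lemma FF_shift (W : X → Y → ℝ) (g : (X → Y → ℝ) → ℝ) (a d : ℝ) (hd : 0 ≤ d) (Q : X → X → Y → ℝ) :
    FF W g a Q - d ≤ FF W g (a - d) Q := by
  unfold FF
  have h1 := le_max_left (max (g (margXY3 Q)) (a - d) - g (margX'Y3 Q)) 0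
  have h2 := le_max_right (max (g (margXY3 Q)) (a - d) - g (margX'Y3 Q)) 0
  have h3 := le_max_left (g (margXY3 Q)) (a - d)
  have h4 := le_max_right (g (margXY3 Q)) (a - d)
  have h5 : max (max (g (margXY3 Q)) a - g (margX'Y3 Q)) 0 ≤
      max (max (g (margXY3 Q)) (a - d) - g (margX'Y3 Q)) 0 + d := by
    refine max_le ?_ (by linarith)
    have : max (g (margXY3 Q)) a ≤ max (g (margXY3 Q)) (a - d) + d := max_le (by linarith) (by linarith)
    linarith
  linarith

lemma Mn_bounds {R : ℝ} (hR : 0 < R) (n : ℕ) :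
    0 < Mn R n ∧ Real.exp (n * R) ≤ 2 * Mn R n ∧ 8 * (Mn R n : ℝ) ≤ Real.exp (n * R + 3) := by
  have h1 : Real.exp (n * R) / 2 ≤ Mn R n := Nat.le_ceil _
  have h2 : (Mn R n : ℝ) < Real.exp (n * R) / 2 + 1 := Nat.ceil_lt_add_one (by positivity)
  have h3 : 1 ≤ Real.exp (n * R) := Real.one_le_exp (by positivity)
  have h4 : (12:ℝ) ≤ Real.exp 3 := by
    have : Real.exp 3 = Real.exp 1 ^ 3 := by rw [← Real.exp_nat_mul]; norm_num
    rw [this]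
    have h := Real.exp_one_gt_d9
    calc (12:ℝ) ≤ 2.7 ^ 3 := by norm_num
      _ ≤ _ := by gcongr; norm_num at h ⊢; linarith
  refine ⟨Nat.ceil_pos.mpr (by positivity), by linarith, ?_⟩
  rw [Real.exp_add]
  nlinarith [Real.exp_pos (n * R)]

lemma exists_code [Nonempty X] [Nonempty Y] (W : X → Y → ℝ) (hW : IsChannel W)
    (g : (X → Y → ℝ) → ℝ)
    (hg : ContinuousOn g {Q : X → Y → ℝ | IsJointPMF Q}) (QX : X → ℝ) (hQX : IsPMF QX)
    (R : ℝ) (hR : 0 < R) (c : ℝ) (hc : (c : EReal) < EexTilde W g QX R) (η : ℝ) (hη : 0 < η) :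
    ∀ᶠ n : ℕ in atTop, 0 < n → (∀ a, ∃ k : ℕ, (n : ℝ) * QX a = (k : ℝ)) →
      ∃ C : Fin (Mn R n) → Fin n → X, (∀ m, emp (C m) = QX) ∧
        ∀ m, Perr W g C m ≤ Real.exp (- n * (c - 4 * η)) := by
  classical
  obtain ⟨ε1, hε1, H1⟩ := FF_slack W hW g hg QX hQX R hR c hc η hη
  obtain ⟨ε2, hε2, N, H2⟩ := alpha_approx g hg QX hQX R hR η hη
  set D : ℝ := 1 + Fintype.card X * Fintype.card Y with hD
  set B : ℝ := Fintype.card X * Fintype.card X + 2 * Fintype.card X with hB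
  set D3 : ℝ := Fintype.card Y * (Fintype.card X * Fintype.card X) with hD3
  set D4 : ℝ := Fintype.card X * Fintype.card X with hD4
  have hXpos : (1:ℝ) ≤ Fintype.card X := by exact_mod_cast Fintype.card_pos
  have hYpos : (1:ℝ) ≤ Fintype.card Y := by exact_mod_cast Fintype.card_pos
  have hDp : 0 < D := by positivity
  have hBp : 0 < B := by positivity
  have hD3p : 0 < D3 := by positivity
  have hD4p : 0 < D4 := by positivity
  have hlog4 : Real.log 4 ≤ 2 := by
    have : Real.log 4 = 2 * Real.log 2 := by
      rw [show (4:ℝ) = 2 ^ 2 by norm_num, Real.log_pow]; norm_num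
    have h := Real.log_two_lt_d9
    rw [this]; norm_num at h ⊢; linarith
  filter_upwards [eventually_ge_atTop N,
    hs_ev ((Fintype.card X : ℝ) * Fintype.card Y) D ε2 (by nlinarith) hDp hε2,
    ell_small (D + 2) η (by positivity) hη, ell_small (B + 3) ε1 (by positivity) hε1,
    ell_small (D3 + D4 + B + 3) η (by positivity) hη] with n hnN hs he2 he3 he4 hn hk
  have hn' : (0:ℝ) < n := by exact_mod_cast hn
  have hL := ell_ge_one n
  obtain ⟨hM0, hM1, hM2⟩ := Mn_bounds hR n
  obtain ⟨x0, hx0, -⟩ := H2 n hnN hn hk (fun _ => Classical.arbitrary Y)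
  obtain ⟨C, hC, hCq, j, hj, hS⟩ := code_n (Y := Y) hn QX x0 hx0 R ε2 (Mn R n) hM0 hM1 hs
  have hS' : ∀ i, ∑ m' ∈ Finset.univ.filter (fun m' => m' ≠ j i),
      Real.exp (n * mi (C (j i)) (C m')) ≤ Real.exp (n * R + (B + 3) * ell n) := by
    intro i
    refine (hS i).trans ?_
    calc 8 * (Mn R n : ℝ) * Real.exp (B * ell n) ≤ Real.exp (n * R + 3) * Real.exp (B * ell n) := by
          gcongr
      _ = Real.exp (n * R + 3 + B * ell n) := by rw [← Real.exp_add]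
      _ ≤ _ := by apply Real.exp_le_exp.mpr; linarith
  have hal : ∀ y : Fin n → Y, Real.exp (n * (alphaFun g QX R (emp y) - 2 * η)) ≤
      ∑ k, Real.exp (n * g (empJoint (C k) y)) := by
    intro y
    obtain ⟨x, hx, hmi, ha⟩ := H2 n hnN hn hk y
    have hq := hCq x y hx hmi
    set F := Finset.univ.filter (fun i => cn (zp (C i) y) = cn (zp x y)) with hF
    have hgF : ∀ i ∈ F, Real.exp (n * g (empJoint (C i) y)) = Real.exp (n * g (empJoint x y)) := by
      intro i hi
      have hi' : cn (zp (C i) y) = cn (zp x y) := (Finset.mem_filter.mp hi).2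
      have : empJoint (C i) y = empJoint x y := by
        funext a b
        rw [empJoint_eq, empJoint_eq]; unfold emp; rw [hi']
      rw [this]
    calc Real.exp (n * (alphaFun g QX R (emp y) - 2 * η))
        ≤ Real.exp (n * (R - mi x y) - D * ell n - Real.log 4 + n * g (empJoint x y)) := by
          apply Real.exp_le_exp.mpr
          have : (n:ℝ) * alphaFun g QX R (emp y) ≤ n * (g (empJoint x y) - mi x y + R + η) := by
            gcongr
          nlinarith
      _ = Real.exp (n * (R - mi x y) - D * ell n) / 4 * Real.exp (n * g (empJoint x y)) := by
          rw [Real.exp_add, Real.exp_sub _ (Real.log 4), Real.exp_log (by norm_num)]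
      _ ≤ F.card * Real.exp (n * g (empJoint x y)) := by gcongr
      _ = ∑ i ∈ F, Real.exp (n * g (empJoint (C i) y)) := by
          rw [Finset.sum_congr rfl hgF]; simp
      _ ≤ _ := Finset.sum_le_sum_of_subset_of_nonneg (Finset.subset_univ _)
          fun _ _ _ => (Real.exp_pos _).le
  refine ⟨fun i => C (j i), fun i => hC _, fun i => ?_⟩
  refine (Perr_mono W hW g C j hj i).trans ?_
  refine (Perr_le W hW g C (j i) (fun q => alphaFun g QX R q - 2 * η) hal).trans ?_
  have hterm : ∀ m' ∈ Finset.univ.filter (fun m' => m' ≠ j i),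
      ∑ y : Fin n → Y, (∏ l, W (C (j i) l) (y l)) * Real.exp (-n *
        max (max (g (empJoint (C (j i)) y)) (alphaFun g QX R (emp y) - 2 * η)
          - g (empJoint (C m') y)) 0) ≤
      Real.exp (-n * (c - 3 * η + R) + (D3 + D4) * ell n) *
        Real.exp (n * mi (C (j i)) (C m')) := by
    intro m' hm'
    have hmi : mi (C (j i)) (C m') ≤ R + ε1 := by
      have h1 : Real.exp (n * mi (C (j i)) (C m')) ≤ Real.exp (n * R + (B + 3) * ell n) :=
        (Finset.single_le_sum (f := fun m' => Real.exp (n * mi (C (j i)) (C m')))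
          (fun _ _ => (Real.exp_pos _).le) hm').trans (hS' i)
      have h2 := Real.exp_le_exp.mp h1
      have h3 : (n:ℝ) * mi (C (j i)) (C m') ≤ n * (R + ε1) := by linarith
      exact le_of_mul_le_mul_left h3 hn'
    refine (ysum hn W hW g (fun q => alphaFun g QX R q - 2 * η) (C (j i)) (C m')
      (c - 3 * η + R - mi (C (j i)) (C m')) ?_).trans ?_
    · intro y
      have h1 := H1 (emp3 (C (j i)) (C m') y) (emp3_pmf hn _ _ _)
        (by rw [emp3_XX, empJoint_margX, hC]) (by rw [emp3_XX, empJoint_margY, hC])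
        (by rw [emp3_XX, mutInf_emp hn]; exact hmi)
      rw [emp3_XX, mutInf_emp hn] at h1
      have h2 := FF_shift W g (alphaFun g QX R (margY3 (emp3 (C (j i)) (C m') y))) (2 * η)
        (by positivity) (emp3 (C (j i)) (C m') y)
      linarith
    · rw [← Real.exp_add, ← Real.exp_add]
      apply Real.exp_le_exp.mpr
      apply le_of_eq
      ring
  refine (Finset.sum_le_sum hterm).trans ?_
  rw [← Finset.mul_sum]
  calc _ ≤ Real.exp (-n * (c - 3 * η + R) + (D3 + D4) * ell n) *
        Real.exp (n * R + (B + 3) * ell n) := by gcongr; exact hS' i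
    _ ≤ _ := by
      rw [← Real.exp_add]
      apply Real.exp_le_exp.mpr
      nlinarith

lemma main_ex [Nonempty X] [Nonempty Y] (W : X → Y → ℝ) (hW : IsChannel W)
    (g : (X → Y → ℝ) → ℝ)
    (hg : ContinuousOn g {Q : X → Y → ℝ | IsJointPMF Q}) (QX : X → ℝ) (hQX : IsPMF QX)
    (R : ℝ) (hR : 0 < R) :
    ∃ C : (n : ℕ) → Fin (Mn R n) → Fin n → X,
      (∀ n : ℕ, n ∈ {n : ℕ | 0 < n ∧ ∀ a, ∃ k : ℕ, (n : ℝ) * QX a = (k : ℝ)} →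
        ∀ m, empPMF (C n m) = QX) ∧
      EexTilde W g QX R ≤
        Filter.liminf (fun n : ℕ =>
          ((-(1 / (n : ℝ)) * Real.log (⨆ m, Perr W g (C n) m) : ℝ) : EReal))
          (Filter.atTop ⊓
            Filter.principal {n : ℕ | 0 < n ∧ ∀ a, ∃ k : ℕ, (n : ℝ) * QX a = (k : ℝ)}) := by
  classical
  have hex : ∀ n : ℕ, ∃ C : Fin (Mn R n) → Fin n → X,
      (0 < n ∧ ∀ a, ∃ k : ℕ, (n : ℝ) * QX a = (k : ℝ)) → (∀ m, emp (C m) = QX) ∧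
      ∀ C' : Fin (Mn R n) → Fin n → X, (∀ m, emp (C' m) = QX) →
        ⨆ m, Perr W g C m ≤ ⨆ m, Perr W g C' m := by
    intro n
    by_cases hn : 0 < n ∧ ∀ a, ∃ k : ℕ, (n : ℝ) * QX a = (k : ℝ)
    · obtain ⟨hn0, hk⟩ := hn
      have hn' : (n:ℝ) ≠ 0 := by exact_mod_cast hn0.ne'
      choose k hk using hk
      obtain ⟨x, hx⟩ := exists_seq (n := n) k (by
        have : (∑ a, (k a : ℝ)) = n := by
          simp only [← hk]; rw [← Finset.mul_sum, hQX.2, mul_one]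
        exact_mod_cast this)
      have hxe : emp x = QX := by
        funext a
        unfold emp; rw [hx, ← hk a]; field_simp
      obtain ⟨C, hC, hmin⟩ := Finset.exists_min_image
        (Finset.univ.filter (fun C : Fin (Mn R n) → Fin n → X => ∀ m, emp (C m) = QX))
        (fun C => ⨆ m, Perr W g C m) ⟨fun _ => x, by simp [hxe]⟩
      refine ⟨C, fun _ => ⟨by simpa using hC, fun C' hC' => hmin C' (by simpa using hC')⟩⟩
    · exact ⟨fun _ _ => Classical.arbitrary X, fun h => absurd h hn⟩
  choose C hC using hex
  refine ⟨C, fun n hn m => (hC n hn).1 m, ?_⟩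
  refine le_of_forall_lt fun c hc => ?_
  obtain ⟨c1, hcc1, hc1⟩ := EReal.lt_iff_exists_real_btwn.mp hc
  obtain ⟨c2, hc12, hc2⟩ := EReal.lt_iff_exists_real_btwn.mp hc1
  have hc12' : c1 < c2 := by exact_mod_cast hc12
  refine lt_of_lt_of_le hcc1 ?_
  refine le_liminf_of_le (by isBoundedDefault) ?_
  rw [eventually_inf_principal]
  have hMn : ∀ᶠ n : ℕ in atTop, 2 ≤ Mn R n := by
    have h := tendsto_natCast_atTop_atTop (R := ℝ) |>.eventually_ge_atTop (4 / R)
    filter_upwards [h] with n h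
    have h1 : Real.exp (n * R) / 2 ≤ Mn R n := Nat.le_ceil _
    have h2 : 4 ≤ n * R := by rwa [div_le_iff₀ hR] at h
    have h3 := Real.add_one_le_exp (n * R)
    have : (2:ℝ) ≤ Mn R n := by linarith
    exact_mod_cast this
  filter_upwards [exists_code W hW g hg QX hQX R hR c2 hc2 ((c2 - c1) / 4) (by linarith), hMn]
    with n hcode hM2 hn
  obtain ⟨C', hC', hP⟩ := hcode hn.1 hn.2
  have hn' : (0:ℝ) < n := by exact_mod_cast hn.1
  have : Nonempty (Fin (Mn R n)) := ⟨⟨0, by omega⟩⟩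
  have hle : ⨆ m, Perr W g (C n) m ≤ Real.exp (-n * c1) := by
    refine ((hC n hn).2 C' hC').trans (ciSup_le fun m => (hP m).trans (le_of_eq ?_))
    congr 1; ring
  have hpos : 0 < ⨆ m, Perr W g (C n) m :=
    lt_of_lt_of_le (Perr_pos hM2 W hW g (C n) ⟨0, by omega⟩)
      (le_ciSup (Set.finite_range _).bddAbove _)
  have hlog : Real.log (⨆ m, Perr W g (C n) m) ≤ -n * c1 := by
    rwa [Real.log_le_iff_le_exp hpos]
  norm_cast
  rw [neg_mul, one_div, inv_mul_eq_div, le_neg, div_le_iff₀ hn']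
  linarith

end asympt

/-- **Proposition 1:** there exists a sequence of constant-composition codebooks of
composition `Q_X` and size `⌈e^{nR}/2⌉`, defined for the blocklengths `n` for which the
type class of `Q_X` is nonempty, whose maximal GLD error probability has exponent at
least `Ẽ_ex(R,Q_X)` along those blocklengths. -/
theorem expurgated_code_exists {𝒳 𝒴 : Type*} [Fintype 𝒳] [Fintype 𝒴]
    [Nonempty 𝒳] [Nonempty 𝒴] [DecidableEq 𝒳] [DecidableEq 𝒴]
    (W : 𝒳 → 𝒴 → ℝ) (hW : IsChannel W)
    (g : (𝒳 → 𝒴 → ℝ) → ℝ) (hg : ContinuousOn g {Q : 𝒳 → 𝒴 → ℝ | IsJointPMF Q})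
    (R : ℝ) (hR : 0 < R) (QX : 𝒳 → ℝ) (hQX : IsPMF QX)
    (hrat : ∀ a, ∃ q : ℚ, QX a = (q : ℝ)) :
    ∃ C : (n : ℕ) → Fin (Mn R n) → Fin n → 𝒳,
      (∀ n : ℕ, n ∈ {n : ℕ | 0 < n ∧ ∀ a, ∃ k : ℕ, (n : ℝ) * QX a = (k : ℝ)} →
        ∀ m, empPMF (C n m) = QX) ∧
      EexTilde W g QX R ≤
        Filter.liminf (fun n : ℕ =>
          ((-(1 / (n : ℝ)) * Real.log (⨆ m, Perr W g (C n) m) : ℝ) : EReal))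
          (Filter.atTop ⊓
            Filter.principal {n : ℕ | 0 < n ∧ ∀ a, ∃ k : ℕ, (n : ℝ) * QX a = (k : ℝ)}) := by
  exact main_ex W hW g hg QX hQX R hR

end EE
end

section
/- (Appendix A, evaluation of Ψ) Let W be a channel from 𝒳 to 𝒴 and let Q_{XX'} be a pmf on 𝒳 × 𝒳. For every ρ ≥ 0, the minimum over conditional pmfs Q_{Y|XX'} of { −∑_{x,x',y} Q_{XX'Y}(x,x',y) log W(y|x) − H_Q(Y|X,X') + ρ ( ∑_{x,y} Q_{XY}(x,y) log W(y|x) − ∑_{x',y} Q_{X'Y}(x',y) log W(y|x') ) }, where Q_{XX'Y} = Q_{XX'} · Q_{Y|XX'} and Q_{XY}, Q_{X'Y} are its marginals, equals −∑_{x,x'} Q_{XX'}(x,x') log [ ∑_y W(y|x)^{1−ρ} W(y|x')^{ρ} ]. Consequently, the supremum over ρ ≥ 0 of this minimum equals Ψ(Q_{XX'}). -/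
open Real BigOperators Filter

namespace EE

variable {𝒳 𝒴 : Type*} [Fintype 𝒳] [Fintype 𝒴]

/-- Gibbs' inequality in unnormalized form. -/
theorem gibbs_ineq {𝒴 : Type*} [Fintype 𝒴] [Nonempty 𝒴] (M q : 𝒴 → ℝ)
    (hM : ∀ y, 0 < M y) (hq : IsPMF q) :
    -Real.log (∑ y, M y) ≤ ∑ y, q y * (Real.log (q y) - Real.log (M y)) := by
  have hZ : 0 < ∑ y, M y := Finset.sum_pos (fun y _ => hM y) Finset.univ_nonempty
  set Z := ∑ y, M y with hZdef
  have key : ∀ y, q y - M y / Z ≤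
      q y * (Real.log (q y) - Real.log (M y)) + q y * Real.log Z := by
    intro y
    have hm := hM y
    rcases (hq.1 y).eq_or_lt with h | h
    · rw [← h]
      have : 0 < M y / Z := by positivity
      linarith
    · have h1 := Real.log_le_sub_one_of_pos (show 0 < M y / (Z * q y) by positivity)
      rw [Real.log_div hm.ne' (by positivity), Real.log_mul hZ.ne' h.ne'] at h1
      have h2 := mul_le_mul_of_nonneg_left h1 h.le
      have h3 : q y * (M y / (Z * q y) - 1) = M y / Z - q y := by
        field_simp
      linarith
  have hs := Finset.sum_le_sum (fun y (_ : y ∈ Finset.univ) => key y)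
  rw [Finset.sum_sub_distrib, Finset.sum_add_distrib, ← Finset.sum_div, ← Finset.sum_mul,
    hq.2, ← hZdef, div_self hZ.ne'] at hs
  linarith

/-- Equality case of Gibbs' inequality. -/
theorem gibbs_eq {𝒴 : Type*} [Fintype 𝒴] [Nonempty 𝒴] (M : 𝒴 → ℝ)
    (hM : ∀ y, 0 < M y) :
    IsPMF (fun y => M y / ∑ z, M z) ∧
    ∑ y, (M y / ∑ z, M z) * (Real.log (M y / ∑ z, M z) - Real.log (M y))
      = -Real.log (∑ y, M y) := by
  have hZ : 0 < ∑ y, M y := Finset.sum_pos (fun y _ => hM y) Finset.univ_nonempty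
  have h1 : ∑ y, M y / ∑ z, M z = 1 := by
    rw [← Finset.sum_div, div_self hZ.ne']
  refine ⟨⟨fun y => (div_pos (hM y) hZ).le, h1⟩, ?_⟩
  have : ∀ y, (M y / ∑ z, M z) * (Real.log (M y / ∑ z, M z) - Real.log (M y))
      = (M y / ∑ z, M z) * (-Real.log (∑ y, M y)) := by
    intro y
    rw [Real.log_div (hM y).ne' hZ.ne']
    ring
  rw [Finset.sum_congr rfl (fun y _ => this y), ← Finset.sum_mul, h1, one_mul]

/-- Rewriting of the Lagrangian as an average of relative-entropy-like terms. -/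
theorem lagr_eq {𝒳 𝒴 : Type*} [Fintype 𝒳] [Fintype 𝒴]
    (W : 𝒳 → 𝒴 → ℝ) (hW : IsChannel W) (Q : 𝒳 → 𝒳 → ℝ) (ρ : ℝ)
    (Qc : 𝒳 → 𝒳 → 𝒴 → ℝ) (hc : ∀ x x', IsPMF (Qc x x')) :
    obj W (jointQ Q Qc)
      + ρ * (gML W (margXY3 (jointQ Q Qc)) - gML W (margX'Y3 (jointQ Q Qc)))
    = ∑ x, ∑ x', Q x x' * ∑ y, Qc x x' y *
        (Real.log (Qc x x' y) - Real.log (W x y ^ (1 - ρ) * W x' y ^ ρ)) := by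
  have e1 : gML W (margXY3 (jointQ Q Qc))
      = ∑ x, ∑ x', ∑ y, jointQ Q Qc x x' y * Real.log (W x y) := by
    unfold gML margXY3
    refine Finset.sum_congr rfl fun x _ => ?_
    rw [Finset.sum_comm]
    simp only [Finset.sum_mul]
  have e2 : gML W (margX'Y3 (jointQ Q Qc))
      = ∑ x, ∑ x', ∑ y, jointQ Q Qc x x' y * Real.log (W x' y) := by
    unfold gML margX'Y3
    refine Eq.trans ?_ Finset.sum_comm
    refine Finset.sum_congr rfl fun x _ => ?_
    rw [Finset.sum_comm]
    simp only [Finset.sum_mul]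
  rw [e1, e2]
  unfold obj condEntY3
  rw [sub_neg_eq_add]
  simp only [← Finset.sum_neg_distrib, ← Finset.sum_add_distrib, ← Finset.sum_sub_distrib,
    Finset.mul_sum]
  refine Finset.sum_congr rfl fun x _ => Finset.sum_congr rfl fun x' _ =>
    Finset.sum_congr rfl fun y _ => ?_
  have hs : ∑ y', jointQ Q Qc x x' y' = Q x x' := by
    simp only [jointQ, ← Finset.mul_sum, (hc x x').2, mul_one]
  rw [hs]
  have hx := (hW x).1 y
  have hx' := (hW x').1 y
  rw [Real.log_mul (Real.rpow_pos_of_pos hx _).ne' (Real.rpow_pos_of_pos hx' _).ne',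
    Real.log_rpow hx, Real.log_rpow hx']
  unfold jointQ
  by_cases h : Q x x' = 0
  · simp [h]
  · rw [mul_div_cancel_left₀ _ h]
    ring

/-- **Appendix A, evaluation of Ψ:** for each `ρ ≥ 0` the inner minimum over conditional
pmfs is `−∑ Q_{XX'}(x,x') log ∑_y W(y|x)^{1−ρ} W(y|x')^ρ`, and taking the supremum over
`ρ ≥ 0` recovers `Ψ(Q_{XX'})`. -/
theorem Psi_evaluation {𝒳 𝒴 : Type*} [Fintype 𝒳] [Fintype 𝒴]
    [Nonempty 𝒳] [Nonempty 𝒴]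
    (W : 𝒳 → 𝒴 → ℝ) (hW : IsChannel W)
    (QXX' : 𝒳 → 𝒳 → ℝ) (hQ : IsJointPMF QXX') :
    (∀ ρ : ℝ, 0 ≤ ρ →
      IsLeast {v : ℝ | ∃ Qc : 𝒳 → 𝒳 → 𝒴 → ℝ, (∀ x x', IsPMF (Qc x x')) ∧
          v = obj W (jointQ QXX' Qc)
              + ρ * (gML W (margXY3 (jointQ QXX' Qc)) - gML W (margX'Y3 (jointQ QXX' Qc)))}
        (-∑ x, ∑ x', QXX' x x' * Real.log (∑ y, W x y ^ (1 - ρ) * W x' y ^ ρ))) ∧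
    (⨆ ρ : {ρ : ℝ // 0 ≤ ρ},
        ((-∑ x, ∑ x', QXX' x x' *
          Real.log (∑ y, W x y ^ (1 - ρ.1) * W x' y ^ ρ.1) : ℝ) : EReal))
      = Psi W QXX' := by
  refine ⟨fun ρ _ => ?_, rfl⟩
  have hM : ∀ x x' y, 0 < W x y ^ (1 - ρ) * W x' y ^ ρ := fun x x' y =>
    mul_pos (Real.rpow_pos_of_pos ((hW x).1 y) _) (Real.rpow_pos_of_pos ((hW x').1 y) _)
  constructor
  · refine ⟨fun x x' y => (W x y ^ (1 - ρ) * W x' y ^ ρ) /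
      ∑ z, W x z ^ (1 - ρ) * W x' z ^ ρ, fun x x' => (gibbs_eq _ (hM x x')).1, ?_⟩
    rw [lagr_eq W hW QXX' ρ _ (fun x x' => (gibbs_eq _ (hM x x')).1)]
    simp only [← Finset.sum_neg_distrib]
    refine Finset.sum_congr rfl fun x _ => Finset.sum_congr rfl fun x' _ => ?_
    rw [(gibbs_eq _ (hM x x')).2, mul_neg]
  · rintro v ⟨Qc, hc, rfl⟩
    rw [lagr_eq W hW QXX' ρ Qc hc]
    simp only [← Finset.sum_neg_distrib]
    refine Finset.sum_le_sum fun x _ => Finset.sum_le_sum fun x' _ => ?_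
    rw [← mul_neg]
    exact mul_le_mul_of_nonneg_left (gibbs_ineq _ _ (hM x x') (hc x x')) (hQ.1 x x')

end EE
end

section
/- (Appendix A, Lagrange duality for a) Let W be a channel from 𝒳 to 𝒴, let Q_X be a pmf on 𝒳, let Q_Y be a pmf on 𝒴 and let R ≥ 0. Then a_{g_ML}(R,Q_Y) = inf_{σ ≥ 0} { σ ( R − H(Q_X) ) + max{ ∑_{x,y} Q_{X̃Y}(x,y) log W(y|x) + σ H_Q(X̃|Y) : Q_{X̃Y} a pmf on 𝒳 × 𝒴 with 𝒴-marginal Q_Y and 𝒳-marginal Q_X } }, where H(Q_X) = −∑_x Q_X(x) log Q_X(x). -/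
open Real BigOperators Filter

namespace EE

variable {𝒳 𝒴 : Type*} [Fintype 𝒳] [Fintype 𝒴]

open scoped Pointwise in
theorem dual_core {E : Type*} [AddCommGroup E] [Module ℝ E] [TopologicalSpace E]
    {K : Set E} (hK : IsCompact K) (f h : E → ℝ)
    (hfc : ContinuousOn f K) (hhc : ContinuousOn h K)
    (hf : ConcaveOn ℝ K f) (hh : ConcaveOn ℝ K h)
    (Q0 : E) (hQ0 : Q0 ∈ K) (h0 : 0 ≤ h Q0) (t : ℝ)
    (ht : ∀ Q ∈ K, 0 ≤ h Q → f Q < t) :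
    ∃ σ : ℝ, 0 ≤ σ ∧ ∀ Q ∈ K, f Q + σ * h Q ≤ t := by
  let A : Set (ℝ × ℝ) := {p | ∃ Q ∈ K, p.1 ≤ h Q ∧ p.2 ≤ f Q}
  have hAeq : A = (fun Q => (h Q, f Q)) '' K + (Set.Iic (0 : ℝ × ℝ)) := by
    ext p
    simp only [Set.mem_add, Set.mem_image, Set.mem_Iic, A, Set.mem_ofPred_eq]
    constructor
    · rintro ⟨Q, hQ, h1, h2⟩
      refine ⟨_, ⟨Q, hQ, rfl⟩, (p.1 - h Q, p.2 - f Q), ?_, ?_⟩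
      · exact ⟨by simpa using h1, by simpa using h2⟩
      · ext <;> simp
    · rintro ⟨_, ⟨Q, hQ, rfl⟩, z, hz, rfl⟩
      have h1 : z.1 ≤ 0 := hz.1
      have h2 : z.2 ≤ 0 := hz.2
      exact ⟨Q, hQ, by simpa using h1, by simpa using h2⟩
  have hAcl : IsClosed A := by
    rw [hAeq]
    exact isClosed_Iic.add_left_of_isCompact (hK.image_of_continuousOn (hhc.prodMk hfc))
  have hAconv : Convex ℝ A := by
    rintro p ⟨Q, hQ, h1, h2⟩ q ⟨S, hS, h3, h4⟩ a b ha hb hab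
    refine ⟨a • Q + b • S, hf.1 hQ hS ha hb hab, ?_, ?_⟩
    · refine le_trans ?_ (hh.2 hQ hS ha hb hab)
      simp only [Prod.fst_add, Prod.smul_fst, smul_eq_mul]
      gcongr
    · refine le_trans ?_ (hf.2 hQ hS ha hb hab)
      simp only [Prod.snd_add, Prod.smul_snd, smul_eq_mul]
      gcongr
  have hnot : ((0 : ℝ), t) ∉ A := by
    rintro ⟨Q, hQ, h1, h2⟩
    exact absurd (ht Q hQ h1) (not_lt.mpr h2)
  obtain ⟨φ, s, hs, hst⟩ := geometric_hahn_banach_closed_point hAconv hAcl hnot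
  have hφ : ∀ u v : ℝ, φ (u, v) = u * φ (1, 0) + v * φ (0, 1) := by
    intro u v
    have : ((u, v) : ℝ × ℝ) = u • ((1, 0) : ℝ × ℝ) + v • ((0, 1) : ℝ × ℝ) := by
      ext <;> simp
    rw [this, map_add, map_smul, map_smul]; simp
  set α := φ (1, 0)
  set β := φ (0, 1)
  have key : ∀ Q ∈ K, ∀ u v : ℝ, u ≤ h Q → v ≤ f Q → u * α + v * β < s := by
    intro Q hQ u v h1 h2
    have := hs (u, v) ⟨Q, hQ, h1, h2⟩
    rwa [hφ] at this
  rw [hφ] at hst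
  have hα : 0 ≤ α := by
    by_contra hneg
    push Not at hneg
    have e := key Q0 hQ0 (h Q0 - (|s - h Q0 * α - f Q0 * β|) / (-α)) (f Q0)
      (by have : 0 ≤ (|s - h Q0 * α - f Q0 * β|) / (-α) := by
            apply div_nonneg (abs_nonneg _); linarith
          linarith) le_rfl
    have e2 : (|s - h Q0 * α - f Q0 * β|) / (-α) * α = -|s - h Q0 * α - f Q0 * β| := by
      have hne := hneg.ne
      rw [div_neg, neg_mul, div_mul_cancel₀ _ hne]
    have := le_abs_self (s - h Q0 * α - f Q0 * β)
    nlinarith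
  have hβ : 0 ≤ β := by
    by_contra hneg
    push Not at hneg
    have e := key Q0 hQ0 (h Q0) (f Q0 - (|s - h Q0 * α - f Q0 * β|) / (-β)) le_rfl
      (by have : 0 ≤ (|s - h Q0 * α - f Q0 * β|) / (-β) := by
            apply div_nonneg (abs_nonneg _); linarith
          linarith)
    have e2 : (|s - h Q0 * α - f Q0 * β|) / (-β) * β = -|s - h Q0 * α - f Q0 * β| := by
      have hne := hneg.ne
      rw [div_neg, neg_mul, div_mul_cancel₀ _ hne]
    have := le_abs_self (s - h Q0 * α - f Q0 * β)
    nlinarith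
  have hβpos : 0 < β := by
    rcases hβ.lt_or_eq with hlt | heq
    · exact hlt
    · exfalso
      have e := key Q0 hQ0 _ _ le_rfl le_rfl
      rw [← heq] at e hst
      nlinarith [mul_nonneg h0 hα]
  refine ⟨α / β, by positivity, fun Q hQ => ?_⟩
  have e := key Q hQ _ _ le_rfl le_rfl
  have e3 : (f Q + α / β * h Q) * β ≤ t * β := by
    have : (f Q + α / β * h Q) * β = h Q * α + f Q * β := by field_simp; ring
    rw [this]; linarith
  exact le_of_mul_le_mul_right e3 hβpos

/-- The set of couplings of `QX` and `QY`. -/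
def coup {𝒳 𝒴 : Type*} [Fintype 𝒳] [Fintype 𝒴] (QX : 𝒳 → ℝ) (QY : 𝒴 → ℝ) :
    Set (𝒳 → 𝒴 → ℝ) := {Q | IsJointPMF Q ∧ margX Q = QX ∧ margY Q = QY}

section
variable {𝒳 𝒴 : Type*} [Fintype 𝒳] [Fintype 𝒴] {QX : 𝒳 → ℝ} {QY : 𝒴 → ℝ}

theorem coup_le_one {Q : 𝒳 → 𝒴 → ℝ} (hQ : Q ∈ coup QX QY) (x : 𝒳) (y : 𝒴) : Q x y ≤ 1 := by
  obtain ⟨⟨h0, h1⟩, -⟩ := hQ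
  rw [← h1]
  calc Q x y ≤ ∑ y, Q x y := Finset.single_le_sum (fun y _ => h0 x y) (Finset.mem_univ y)
    _ ≤ _ := Finset.single_le_sum (f := fun x => ∑ y, Q x y)
      (fun x _ => Finset.sum_nonneg fun y _ => h0 x y) (Finset.mem_univ x)

theorem coup_compact : IsCompact (coup QX QY) := by
  have hc : IsClosed (coup QX QY) := by
    have : coup QX QY = (⋂ x, ⋂ y, {Q : 𝒳 → 𝒴 → ℝ | 0 ≤ Q x y}) ∩
        ({Q | ∑ x, ∑ y, Q x y = 1} ∩
        ((⋂ x, {Q | ∑ y, Q x y = QX x}) ∩ (⋂ y, {Q | ∑ x, Q x y = QY y}))) := by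
      ext Q
      simp [coup, IsJointPMF, margX, margY, funext_iff, and_assoc]
    rw [this]
    refine (isClosed_iInter fun x => isClosed_iInter fun y => ?_).inter
      (IsClosed.inter ?_ ((isClosed_iInter fun x => ?_).inter (isClosed_iInter fun y => ?_)))
    · exact isClosed_le (by fun_prop) (by fun_prop)
    all_goals exact isClosed_eq (by fun_prop) (by fun_prop)
  have hb : IsCompact (Set.Icc (0 : 𝒳 → 𝒴 → ℝ) 1) := by
    have : Set.Icc (0 : 𝒳 → 𝒴 → ℝ) 1 =
      Set.pi Set.univ (fun _ => Set.pi Set.univ (fun _ => Set.Icc (0:ℝ) 1)) := by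
      ext Q; simp [Pi.le_def]
    rw [this]
    exact isCompact_univ_pi fun _ => isCompact_univ_pi fun _ => isCompact_Icc
  exact hb.of_isClosed_subset hc fun Q hQ => ⟨fun x y => hQ.1.1 x y, fun x y => coup_le_one hQ x y⟩

theorem coup_convex : Convex ℝ (coup QX QY) := by
  rintro P ⟨⟨p0, p1⟩, p2, p3⟩ Q ⟨⟨q0, q1⟩, q2, q3⟩ a b ha hb hab
  refine ⟨⟨fun x y => ?_, ?_⟩, ?_, ?_⟩
  · have := p0 x y
    have := q0 x y
    simp only [Pi.add_apply, Pi.smul_apply, smul_eq_mul]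
    positivity
  · simp only [Pi.add_apply, Pi.smul_apply, smul_eq_mul, Finset.sum_add_distrib, ← Finset.mul_sum]
    rw [p1, q1]; linarith
  · funext x
    have e1 := congrFun p2 x
    have e2 := congrFun q2 x
    simp only [margX] at e1 e2
    simp only [margX, Pi.add_apply, Pi.smul_apply, smul_eq_mul, Finset.sum_add_distrib,
      ← Finset.mul_sum]
    rw [e1, e2, ← add_mul, hab, one_mul]
  · funext y
    have e1 := congrFun p3 y
    have e2 := congrFun q3 y
    simp only [margY] at e1 e2
    simp only [margY, Pi.add_apply, Pi.smul_apply, smul_eq_mul, Finset.sum_add_distrib,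
      ← Finset.mul_sum]
    rw [e1, e2, ← add_mul, hab, one_mul]

theorem coup_condEnt {Q : 𝒳 → 𝒴 → ℝ} (hQ : Q ∈ coup QX QY) :
    condEntXY Q = ∑ x, ∑ y, negMulLog (Q x y) - ent QY := by
  obtain ⟨⟨h0, -⟩, -, h3⟩ := hQ
  have e : ent QY = -∑ x, ∑ y, Q x y * log (QY y) := by
    rw [ent, Finset.sum_comm]
    congr 1
    refine Finset.sum_congr rfl fun y _ => ?_
    rw [← Finset.sum_mul]
    have := congrFun h3 y
    simp only [margY] at this
    rw [this]
  rw [e, condEntXY, sub_neg_eq_add, ← Finset.sum_neg_distrib, ← Finset.sum_add_distrib]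
  refine Finset.sum_congr rfl fun x _ => ?_
  rw [← Finset.sum_neg_distrib, ← Finset.sum_add_distrib]
  refine Finset.sum_congr rfl fun y _ => ?_
  rw [h3, negMulLog]
  by_cases hz : Q x y = 0
  · simp [hz]
  · have hy : QY y ≠ 0 := by
      rw [← h3]
      have : 0 < Q x y := lt_of_le_of_ne (h0 x y) (Ne.symm hz)
      have h2 : Q x y ≤ margY Q y :=
        Finset.single_le_sum (f := fun x => Q x y) (fun x _ => h0 x y) (Finset.mem_univ x)
      linarith
    rw [log_div hz hy]; ring

theorem coup_mutInf {Q : 𝒳 → 𝒴 → ℝ} (hQ : Q ∈ coup QX QY) :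
    mutInf Q = ent QX - condEntXY Q := by
  obtain ⟨⟨h0, -⟩, h2, h3⟩ := hQ
  have e : ent QX = -∑ x, ∑ y, Q x y * log (QX x) := by
    rw [ent]
    congr 1
    refine Finset.sum_congr rfl fun x _ => ?_
    rw [← Finset.sum_mul]
    have := congrFun h2 x
    simp only [margX] at this
    rw [this]
  rw [e, condEntXY, mutInf, sub_neg_eq_add, ← Finset.sum_neg_distrib, ← Finset.sum_add_distrib]
  refine Finset.sum_congr rfl fun x _ => ?_
  rw [← Finset.sum_neg_distrib, ← Finset.sum_add_distrib]
  refine Finset.sum_congr rfl fun y _ => ?_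
  rw [h3, h2]
  by_cases hz : Q x y = 0
  · simp [hz]
  · have hp : 0 < Q x y := lt_of_le_of_ne (h0 x y) (Ne.symm hz)
    have hy : QY y ≠ 0 := by
      rw [← h3]
      have h2 : Q x y ≤ margY Q y :=
        Finset.single_le_sum (f := fun x => Q x y) (fun x _ => h0 x y) (Finset.mem_univ x)
      linarith
    have hx : QX x ≠ 0 := by
      rw [← h2]
      have h2 : Q x y ≤ margX Q x :=
        Finset.single_le_sum (f := fun y => Q x y) (fun y _ => h0 x y) (Finset.mem_univ y)
      linarith
    rw [log_div hz hy, log_div hz (mul_ne_zero hx hy), log_mul hx hy]; ring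

theorem prod_mem (hQX : IsPMF QX) (hQY : IsPMF QY) :
    (fun x y => QX x * QY y) ∈ coup QX QY := by
  refine ⟨⟨fun x y => mul_nonneg (hQX.1 x) (hQY.1 y), ?_⟩, ?_, ?_⟩
  · simp [← Finset.mul_sum, hQX.2, hQY.2]
  · funext x; simp [margX, ← Finset.mul_sum, hQY.2]
  · funext y; simp [margY, ← Finset.sum_mul, hQX.2]

theorem prod_mutInf (hQX : IsPMF QX) (hQY : IsPMF QY) :
    mutInf (fun x y => QX x * QY y) = 0 := by
  have h := prod_mem hQX hQY
  rw [mutInf, h.2.1, h.2.2]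
  refine Finset.sum_eq_zero fun x _ => Finset.sum_eq_zero fun y _ => ?_
  by_cases hz : QX x * QY y = 0
  · simp [hz]
  · simp [div_self hz]

theorem gML_cont (W : 𝒳 → 𝒴 → ℝ) : Continuous (gML W) := by
  unfold gML; fun_prop

theorem gML_concave (W : 𝒳 → 𝒴 → ℝ) : ConcaveOn ℝ (coup QX QY) (gML W) := by
  refine ⟨coup_convex, fun P _ Q _ a b _ _ _ => le_of_eq ?_⟩
  simp only [gML, Pi.add_apply, Pi.smul_apply, smul_eq_mul, add_mul, Finset.sum_add_distrib,
    Finset.mul_sum, mul_assoc]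

theorem condEnt_cont : ContinuousOn (condEntXY : (𝒳 → 𝒴 → ℝ) → ℝ) (coup QX QY) := by
  have : Continuous fun Q : 𝒳 → 𝒴 → ℝ => ∑ x, ∑ y, negMulLog (Q x y) - ent QY := by
    fun_prop
  exact this.continuousOn.congr fun Q hQ => coup_condEnt hQ

theorem condEnt_concave : ConcaveOn ℝ (coup QX QY) (condEntXY : (𝒳 → 𝒴 → ℝ) → ℝ) := by
  refine ⟨coup_convex, fun P hP Q hQ a b ha hb hab => ?_⟩
  rw [coup_condEnt hP, coup_condEnt hQ, coup_condEnt (coup_convex hP hQ ha hb hab)]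
  have key : a * ∑ x, ∑ y, negMulLog (P x y) + b * ∑ x, ∑ y, negMulLog (Q x y) ≤
      ∑ x, ∑ y, negMulLog ((a • P + b • Q) x y) := by
    simp only [Finset.mul_sum, ← Finset.sum_add_distrib]
    refine Finset.sum_le_sum fun x _ => Finset.sum_le_sum fun y _ => ?_
    exact concaveOn_negMulLog.2 (hP.1.1 x y) (hQ.1.1 x y) ha hb hab
  simp only [smul_eq_mul]
  have : a * ent QY + b * ent QY = ent QY := by rw [← add_mul, hab, one_mul]
  linarith
end

/-- **Appendix A, Lagrange duality for `a`:** `a_{g_ML}(R,Q_Y)` equals the infimum over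
`σ ≥ 0` of `σ(R − H(Q_X))` plus the maximum of `g_ML(Q_{X̃Y}) + σ H_Q(X̃|Y)` over joint
pmfs with the prescribed marginals. -/
theorem aML_duality {𝒳 𝒴 : Type*} [Fintype 𝒳] [Fintype 𝒴]
    [Nonempty 𝒳] [Nonempty 𝒴]
    (W : 𝒳 → 𝒴 → ℝ) (hW : IsChannel W)
    (QX : 𝒳 → ℝ) (hQX : IsPMF QX) (QY : 𝒴 → ℝ) (hQY : IsPMF QY) (R : ℝ) (hR : 0 ≤ R) :
    aFun (gML W) QX R QY =
      sInf {v : ℝ | ∃ σ : ℝ, 0 ≤ σ ∧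
        v = σ * (R - ent QX) +
          sSup {w : ℝ | ∃ Q : 𝒳 → 𝒴 → ℝ, IsJointPMF Q ∧ margX Q = QX ∧ margY Q = QY ∧
            w = gML W Q + σ * condEntXY Q}} := by
  set K := coup QX QY with hKdef
  have hbddS : ∀ σ : ℝ, BddAbove {w : ℝ | ∃ Q : 𝒳 → 𝒴 → ℝ, IsJointPMF Q ∧ margX Q = QX ∧
      margY Q = QY ∧ w = gML W Q + σ * condEntXY Q} := by
    intro σ
    have hc : ContinuousOn (fun Q => gML W Q + σ * condEntXY Q) K :=
      (gML_cont W).continuousOn.add (continuousOn_const.mul condEnt_cont)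
    refine (coup_compact.image_of_continuousOn hc).bddAbove.mono ?_
    rintro w ⟨Q, h1, h2, h3, rfl⟩
    exact ⟨Q, ⟨h1, h2, h3⟩, rfl⟩
  have hbddA : BddAbove {v : ℝ | ∃ Q : 𝒳 → 𝒴 → ℝ, IsJointPMF Q ∧ margX Q = QX ∧
      margY Q = QY ∧ mutInf Q ≤ R ∧ v = gML W Q} := by
    refine (coup_compact.image_of_continuousOn (s := coup QX QY)
      (gML_cont W).continuousOn).bddAbove.mono ?_
    rintro w ⟨Q, h1, h2, h3, -, rfl⟩
    exact ⟨Q, ⟨h1, h2, h3⟩, rfl⟩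
  have hP := prod_mem hQX hQY
  have hPI := prod_mutInf hQX hQY
  have weak : ∀ Q ∈ K, mutInf Q ≤ R → ∀ σ : ℝ, 0 ≤ σ → gML W Q ≤ σ * (R - ent QX) +
          sSup {w : ℝ | ∃ Q : 𝒳 → 𝒴 → ℝ, IsJointPMF Q ∧ margX Q = QX ∧ margY Q = QY ∧
            w = gML W Q + σ * condEntXY Q} := by
    intro Q hQ hI σ hσ
    have := le_csSup (hbddS σ) ⟨Q, hQ.1, hQ.2.1, hQ.2.2, rfl⟩
    rw [coup_mutInf hQ] at hI
    nlinarith [mul_nonneg hσ (sub_nonneg.mpr hI)]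
  unfold aFun
  apply le_antisymm
  · refine csSup_le ⟨_, _, hP.1, hP.2.1, hP.2.2, hPI.le.trans hR, rfl⟩ ?_
    rintro v ⟨Q, h1, h2, h3, h4, rfl⟩
    refine le_csInf ⟨_, 0, le_rfl, rfl⟩ ?_
    rintro w ⟨σ, hσ, rfl⟩
    exact weak Q ⟨h1, h2, h3⟩ h4 σ hσ
  · refine le_of_forall_pos_le_add fun ε hε => ?_
    obtain ⟨σ, hσ, hs⟩ := dual_core (K := K) coup_compact (gML W)
      (fun Q => (R - ent QX) + condEntXY Q) (gML_cont W).continuousOn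
      (continuousOn_const.add condEnt_cont) (gML_concave W)
      ((concaveOn_const _ coup_convex).add condEnt_concave) _ hP
      (by have := coup_mutInf hP
          rw [hPI] at this
          linarith)
      (sSup {v : ℝ | ∃ Q : 𝒳 → 𝒴 → ℝ, IsJointPMF Q ∧ margX Q = QX ∧
        margY Q = QY ∧ mutInf Q ≤ R ∧ v = gML W Q} + ε)
      (by intro Q hQ h0
          have hI : mutInf Q ≤ R := by rw [coup_mutInf hQ]; linarith
          have := le_csSup hbddA (a := gML W Q) ⟨Q, hQ.1, hQ.2.1, hQ.2.2, hI, rfl⟩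
          linarith)
    refine le_trans (csInf_le ?_ ⟨σ, hσ, rfl⟩) ?_
    · refine ⟨gML W (fun x y => QX x * QY y), ?_⟩
      rintro v ⟨τ, hτ, rfl⟩
      exact weak _ hP (hPI.le.trans hR) τ hτ
    · rw [← le_sub_iff_add_le']
      refine csSup_le ⟨_, _, hP.1, hP.2.1, hP.2.2, rfl⟩ ?_
      rintro w ⟨Q, h1, h2, h3, rfl⟩
      have := hs Q ⟨h1, h2, h3⟩
      simp only [mul_add] at this
      linarith

end EE
end

section
/- (Appendix A, eq. (A.26)) Let W be a channel from 𝒳 to 𝒴, let Q_X be a pmf on 𝒳, let Q_Y be a pmf on 𝒴 and let R ≥ 0. Then a_{g_ML}(R,Q_Y) ≤ inf_{σ > 0} inf_{τ ≥ 0} inf_V { σ ( R − H(Q_X) ) + ∑_y Q_Y(y) log G(y,σ,τ,V) }, where the innermost infimum is over strictly positive pmfs V on 𝒳 and H(Q_X) = −∑_x Q_X(x) log Q_X(x). -/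
open Real BigOperators Filter

namespace EE

variable {𝒳 𝒴 : Type*} [Fintype 𝒳] [Fintype 𝒴]

lemma prod_feas {𝒳 𝒴 : Type*} [Fintype 𝒳] [Fintype 𝒴]
    (QX : 𝒳 → ℝ) (hQX : IsPMF QX) (QY : 𝒴 → ℝ) (hQY : IsPMF QY) :
    IsJointPMF (fun x y => QX x * QY y) ∧ margX (fun x y => QX x * QY y) = QX ∧
    margY (fun x y => QX x * QY y) = QY ∧ mutInf (fun x y => QX x * QY y) = 0 := by
  have h1 : margX (fun x y => QX x * QY y) = QX := by
    funext x; simp [margX, ← Finset.mul_sum, hQY.2]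
  have h2 : margY (fun x y => QX x * QY y) = QY := by
    funext x; simp [margY, ← Finset.sum_mul, hQX.2]
  refine ⟨⟨fun x y => mul_nonneg (hQX.1 x) (hQY.1 y), ?_⟩, h1, h2, ?_⟩
  · simp [← Finset.mul_sum, hQY.2, hQX.2]
  · unfold mutInf
    rw [h1, h2]
    refine Finset.sum_eq_zero fun x _ => Finset.sum_eq_zero fun y _ => ?_
    by_cases h : QX x * QY y = 0
    · simp [h]
    · simp [div_self h]

lemma mul_log_le (q t : ℝ) (hq : 0 < q) (ht : 0 < t) :
    q * (Real.log t - Real.log q) ≤ t - q := by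
  have h := Real.log_le_sub_one_of_pos (div_pos ht hq)
  rw [Real.log_div ht.ne' hq.ne'] at h
  calc _ ≤ q * (t / q - 1) := mul_le_mul_of_nonneg_left h hq.le
    _ = t - q := by field_simp

lemma main_bound {𝒳 𝒴 : Type*} [Fintype 𝒳] [Fintype 𝒴]
    (W : 𝒳 → 𝒴 → ℝ) (hW : IsChannel W)
    (QX : 𝒳 → ℝ) (hQX : IsPMF QX) (QY : 𝒴 → ℝ) (hQY : IsPMF QY) (R : ℝ)
    (Q : 𝒳 → 𝒴 → ℝ) (hQ : IsJointPMF Q) (hX : margX Q = QX) (hY : margY Q = QY)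
    (hI : mutInf Q ≤ R) (σ τ : ℝ) (hσ : 0 < σ) (hτ : 0 ≤ τ) (V : 𝒳 → ℝ) (hV : IsPosPMF V) :
    gML W Q ≤ σ * (R - ent QX) + ∑ y, QY y * Real.log (Gfun W QX y σ τ V) := by
  have hXs : ∀ x, ∑ y, Q x y = QX x := fun x => congrFun hX x
  have hYs : ∀ y, ∑ x, Q x y = QY y := fun y => congrFun hY y
  set f : 𝒳 → 𝒴 → ℝ := fun x y => W x y ^ (1 / σ) * QX x ^ (τ / σ) * V x ^ (-(τ / σ)) with hf
  have hf0 : ∀ x y, 0 ≤ f x y := fun x y =>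
    mul_nonneg (mul_nonneg (Real.rpow_nonneg ((hW x).1 y).le _) (Real.rpow_nonneg (hQX.1 x) _))
      (Real.rpow_nonneg (hV.1 x).le _)
  have hfpos : ∀ x y, 0 < QX x → 0 < f x y := fun x y h =>
    mul_pos (mul_pos (Real.rpow_pos_of_pos ((hW x).1 y) _) (Real.rpow_pos_of_pos h _))
      (Real.rpow_pos_of_pos (hV.1 x) _)
  set S : 𝒴 → ℝ := fun y => ∑ x, f x y with hS
  obtain ⟨x0, hx0⟩ : ∃ x, 0 < QX x := by
    by_contra! hcon
    have : ∑ x, QX x ≤ 0 := Finset.sum_nonpos fun x _ => hcon x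
    rw [hQX.2] at this
    linarith
  have hSpos : ∀ y, 0 < S y := fun y =>
    Finset.sum_pos' (fun x _ => hf0 x y) ⟨x0, Finset.mem_univ _, hfpos x0 y hx0⟩
  have hG : ∀ y, Real.log (Gfun W QX y σ τ V) = σ * Real.log (S y) := fun y =>
    Real.log_rpow (hSpos y) σ
  have hVX : ∑ x, QX x * (Real.log (V x) - Real.log (QX x)) ≤ 0 := by
    calc _ ≤ ∑ x, (V x - QX x) := by
          refine Finset.sum_le_sum fun x _ => ?_
          rcases (hQX.1 x).eq_or_lt with h | h
          · simp [← h, (hV.1 x).le]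
          · exact mul_log_le _ _ h (hV.1 x)
      _ = 0 := by rw [Finset.sum_sub_distrib, hV.2, hQX.2]; ring
  have key : ∀ x y, Q x y * Real.log (W x y) ≤
      σ * (f x y * (QY y / S y)) - σ * Q x y
      + σ * (Q x y * Real.log (Q x y / (QX x * QY y)))
      + Q x y * (σ * Real.log (QX x)) + Q x y * (σ * Real.log (S y))
      + Q x y * (τ * (Real.log (V x) - Real.log (QX x))) := by
    intro x y
    rcases (hQ.1 x y).eq_or_lt with h | h
    · have := mul_nonneg hσ.le (mul_nonneg (hf0 x y) (div_nonneg (hQY.1 y) (hSpos y).le))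
      simpa [← h] using this
    · have hx : 0 < QX x := by
        rw [← hXs]
        exact Finset.sum_pos' (fun y _ => hQ.1 x y) ⟨y, Finset.mem_univ _, h⟩
      have hy : 0 < QY y := by
        rw [← hYs]
        exact Finset.sum_pos' (fun x _ => hQ.1 x y) ⟨x, Finset.mem_univ _, h⟩
      have hfp := hfpos x y hx
      have hlf : σ * Real.log (f x y) =
          Real.log (W x y) + τ * (Real.log (QX x) - Real.log (V x)) := by
        have a1 := Real.rpow_pos_of_pos ((hW x).1 y) (1 / σ)
        have a2 := Real.rpow_pos_of_pos hx (τ / σ)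
        have a3 := Real.rpow_pos_of_pos (hV.1 x) (-(τ / σ))
        simp only [hf]
        rw [Real.log_mul (mul_pos a1 a2).ne' a3.ne', Real.log_mul a1.ne' a2.ne',
          Real.log_rpow ((hW x).1 y), Real.log_rpow hx, Real.log_rpow (hV.1 x)]
        field_simp
        ring
      have h1 := mul_log_le (Q x y) (f x y * (QY y / S y)) h (mul_pos hfp (div_pos hy (hSpos y)))
      rw [Real.log_mul hfp.ne' (div_pos hy (hSpos y)).ne', Real.log_div hy.ne' (hSpos y).ne'] at h1
      have h2 := mul_le_mul_of_nonneg_left h1 hσ.le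
      rw [Real.log_div h.ne' (mul_pos hx hy).ne', Real.log_mul hx.ne' hy.ne']
      have h3 : Real.log (W x y) =
        σ * Real.log (f x y) - τ * (Real.log (QX x) - Real.log (V x)) := by linarith
      rw [h3]
      linarith
  have hsum := Finset.sum_le_sum fun x (_ : x ∈ Finset.univ) =>
    Finset.sum_le_sum fun y (_ : y ∈ Finset.univ) => key x y
  simp only [Finset.sum_add_distrib, Finset.sum_sub_distrib] at hsum
  have e1 : ∑ x, ∑ y, σ * (f x y * (QY y / S y)) = σ := by
    rw [Finset.sum_comm]
    calc _ = ∑ y, σ * QY y := by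
          refine Finset.sum_congr rfl fun y _ => ?_
          rw [← Finset.mul_sum, ← Finset.sum_mul]
          change σ * (S y * (QY y / S y)) = _
          rw [mul_div_cancel₀ _ (hSpos y).ne']
      _ = σ := by rw [← Finset.mul_sum, hQY.2, mul_one]
  have e2 : ∑ x, ∑ y, σ * Q x y = σ := by
    simp only [← Finset.mul_sum]
    rw [hQ.2, mul_one]
  have e3 : ∑ x, ∑ y, σ * (Q x y * Real.log (Q x y / (QX x * QY y))) = σ * mutInf Q := by
    simp only [← Finset.mul_sum, mutInf, hX, hY]
  have e4 : ∑ x, ∑ y, Q x y * (σ * Real.log (QX x)) = - (σ * ent QX) := by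
    simp only [← Finset.sum_mul, hXs, ent, mul_neg, neg_neg, Finset.mul_sum]
    exact Finset.sum_congr rfl fun x _ => by ring
  have e5 : ∑ x, ∑ y, Q x y * (σ * Real.log (S y)) = ∑ y, QY y * (σ * Real.log (S y)) := by
    rw [Finset.sum_comm]
    simp only [← Finset.sum_mul, hYs]
  have e6 : ∑ x, ∑ y, Q x y * (τ * (Real.log (V x) - Real.log (QX x))) =
      τ * ∑ x, QX x * (Real.log (V x) - Real.log (QX x)) := by
    simp only [← Finset.sum_mul, hXs, Finset.mul_sum]
    exact Finset.sum_congr rfl fun x _ => by ring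
  rw [e1, e2, e3, e4, e5, e6] at hsum
  have h7 := mul_nonpos_of_nonneg_of_nonpos hτ hVX
  have h8 := mul_le_mul_of_nonneg_left hI hσ.le
  simp only [hG]
  unfold gML
  linarith

/-- **Appendix A, eq. (A.26):** an upper bound on `a_{g_ML}(R,Q_Y)` in terms of the
function `G(y,σ,τ,V)`. -/
theorem aML_upper_bound_G {𝒳 𝒴 : Type*} [Fintype 𝒳] [Fintype 𝒴]
    [Nonempty 𝒳] [Nonempty 𝒴]
    (W : 𝒳 → 𝒴 → ℝ) (hW : IsChannel W)
    (QX : 𝒳 → ℝ) (hQX : IsPMF QX) (QY : 𝒴 → ℝ) (hQY : IsPMF QY) (R : ℝ) (hR : 0 ≤ R) :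
    ((aFun (gML W) QX R QY : ℝ) : EReal) ≤
      ⨅ σ : {σ : ℝ // 0 < σ}, ⨅ τ : {τ : ℝ // 0 ≤ τ}, ⨅ V : {V : 𝒳 → ℝ // IsPosPMF V},
        ((σ.1 * (R - ent QX)
          + ∑ y, QY y * Real.log (Gfun W QX y σ.1 τ.1 V.1) : ℝ) : EReal) := by
  refine le_iInf fun σ => le_iInf fun τ => le_iInf fun V => ?_
  rw [EReal.coe_le_coe_iff]
  obtain ⟨h1, h2, h3, h4⟩ := prod_feas QX hQX QY hQY
  refine csSup_le ⟨_, _, h1, h2, h3, h4.le.trans hR, rfl⟩ ?_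
  rintro v ⟨Q, hQ, hX, hY, hI, rfl⟩
  exact main_bound W hW QX hQX QY hQY R Q hQ hX hY hI σ.1 τ.1 σ.2 τ.2 V.1 V.2

end EE
end
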